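/- arXiv:1008.5314 — 3 statements merged into one kernel-verified Lean document; each statement's English description precedes it below -/
import Mathlib

section
/- Let R be a graded polynomial ring, A ⊂ R a homogeneous ideal, f ∈ R a homogeneous element of degree d with A : f = A, and B ⊇ A a homogeneous ideal. Then for the ideal C = A + fB, the Hilbert function satisfies H_{R/C}(t) = H_{R/B}(t-d) + H_{R/A}(t) - H_{R/A}(t-d) for all t. Equivalently, H_C(t) = H_B(t-d) + H_A(t) - H_A(t-d). -/
open MvPolynomial

/-- An ideal of a polynomial ring is homogeneous (w.r.t. the standard grading). -/
def IsHomogeneousIdeal {K : Type*} [Field K] {n : ℕ}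
    (I : Ideal (MvPolynomial (Fin n) K)) : Prop :=
  ∀ p ∈ I, ∀ d : ℕ, MvPolynomial.homogeneousComponent d p ∈ I

/-- The Hilbert function of the ideal `I` in degree `d ∈ ℤ`: the `K`-dimension of the
space of homogeneous elements of degree `d` lying in `I` (and `0` in negative degrees). -/
noncomputable def idealHilbert {K : Type*} [Field K] {n : ℕ}
    (I : Ideal (MvPolynomial (Fin n) K)) (d : ℤ) : ℕ :=
  if d < 0 then 0 else
    Module.finrank K
      ((Submodule.restrictScalars K I) ⊓ MvPolynomial.homogeneousSubmodule (Fin n) K d.toNat :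
        Submodule K (MvPolynomial (Fin n) K))

/-- The Hilbert function of `R/I` in degree `d ∈ ℤ`. -/
noncomputable def quotHilbert {K : Type*} [Field K] {n : ℕ}
    (I : Ideal (MvPolynomial (Fin n) K)) (d : ℤ) : ℕ :=
  if d < 0 then 0 else
    Module.finrank K
      ((MvPolynomial.homogeneousSubmodule (Fin n) K d.toNat).map
        (Ideal.Quotient.mkₐ K I).toLinearMap)

/-- Degree `t` piece of an ideal. -/
noncomputable abbrev bdlPiece {K : Type*} [Field K] {n : ℕ}
    (I : Ideal (MvPolynomial (Fin n) K)) (t : ℕ) : Submodule K (MvPolynomial (Fin n) K) :=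
  (Submodule.restrictScalars K I) ⊓ MvPolynomial.homogeneousSubmodule (Fin n) K t

lemma bdl_finite_homog (K : Type*) [Field K] (n t : ℕ) :
    FiniteDimensional K (homogeneousSubmodule (Fin n) K t) :=
  Module.Finite.iff_fg.mpr (homogeneousSubmodule_fg _ _ t)

lemma bdl_finite_piece {K : Type*} [Field K] {n : ℕ}
    (I : Ideal (MvPolynomial (Fin n) K)) (t : ℕ) : FiniteDimensional K (bdlPiece I t) :=
  have := bdl_finite_homog K n t
  Submodule.finiteDimensional_of_le inf_le_right

lemma bdl_rank_nullity {K : Type*} [Field K] {n : ℕ}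
    (I : Ideal (MvPolynomial (Fin n) K)) (t : ℕ) :
    Module.finrank K ((homogeneousSubmodule (Fin n) K t).map
        (Ideal.Quotient.mkₐ K I).toLinearMap) + Module.finrank K (bdlPiece I t)
      = Module.finrank K (homogeneousSubmodule (Fin n) K t) := by
  have := bdl_finite_homog K n t
  have h := LinearMap.finrank_range_add_finrank_ker
    ((Ideal.Quotient.mkₐ K I).toLinearMap.domRestrict (homogeneousSubmodule (Fin n) K t))
  rw [LinearMap.range_domRestrict] at h
  rw [← h]
  congr 1
  rw [← Submodule.finrank_map_subtype_eq]
  have : bdlPiece I t = Submodule.map (homogeneousSubmodule (Fin n) K t).subtype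
      (LinearMap.ker ((Ideal.Quotient.mkₐ K I).toLinearMap.domRestrict
        (homogeneousSubmodule (Fin n) K t))) := by
    ext p
    simp [bdlPiece, Ideal.Quotient.eq_zero_iff_mem, and_comm]
  rw [this]

lemma bdl_comp_mul {K : Type*} [Field K] {n : ℕ} (f b : MvPolynomial (Fin n) K) (d t : ℕ)
    (hf : f.IsHomogeneous d) :
    homogeneousComponent t (f * b) =
      if d ≤ t then f * homogeneousComponent (t - d) b else 0 := by
  let := MvPolynomial.gradedAlgebra (σ := Fin n) (R := K)
  have h := DirectSum.coe_decompose_mul_of_left_mem (homogeneousSubmodule (Fin n) K) (b := b) t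
    ((mem_homogeneousSubmodule d f).mpr hf)
  have hc : ∀ (p : MvPolynomial (Fin n) K) (i : ℕ),
      (DirectSum.decompose (homogeneousSubmodule (Fin n) K) p i : MvPolynomial (Fin n) K) =
        homogeneousComponent i p := fun p i => decomposition.decompose'_apply p i
  rwa [hc, hc] at h

lemma bdl_piece_lt {K : Type*} [Field K] {n : ℕ}
    (A B : Ideal (MvPolynomial (Fin n) K)) (hA : IsHomogeneousIdeal A)
    (f : MvPolynomial (Fin n) K) (d : ℕ) (hf : f.IsHomogeneous d) (t : ℕ) (ht : t < d) :
    bdlPiece (A ⊔ Ideal.span {f} * B) t = bdlPiece A t := by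
  apply le_antisymm
  · rintro p ⟨hp, hpt⟩
    refine ⟨?_, hpt⟩
    obtain ⟨a, ha, c, hc, rfl⟩ := Submodule.mem_sup.mp (show p ∈ A ⊔ Ideal.span {f} * B from hp)
    obtain ⟨b, hb, rfl⟩ := Ideal.mem_span_singleton_mul.mp hc
    rw [← homogeneousComponent_eq_self ((mem_homogeneousSubmodule _ _).mp hpt), map_add,
      bdl_comp_mul f b d t hf, if_neg (by omega), add_zero]
    exact hA a ha t
  · exact inf_le_inf_right _ (show A ≤ A ⊔ Ideal.span {f} * B from le_sup_left)

lemma bdl_piece_add {K : Type*} [Field K] {n : ℕ}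
    (A B : Ideal (MvPolynomial (Fin n) K)) (hA : IsHomogeneousIdeal A)
    (hB : IsHomogeneousIdeal B)
    (f : MvPolynomial (Fin n) K) (d : ℕ) (hf : f.IsHomogeneous d) (s : ℕ) :
    bdlPiece (A ⊔ Ideal.span {f} * B) (s + d) =
      bdlPiece A (s + d) ⊔ (bdlPiece B s).map (LinearMap.mulLeft K f) := by
  apply le_antisymm
  · rintro p ⟨hp, hpt⟩
    obtain ⟨a, ha, c, hc, rfl⟩ := Submodule.mem_sup.mp (show p ∈ A ⊔ Ideal.span {f} * B from hp)
    obtain ⟨b, hb, rfl⟩ := Ideal.mem_span_singleton_mul.mp hc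
    rw [← homogeneousComponent_eq_self ((mem_homogeneousSubmodule _ _).mp hpt), map_add,
      bdl_comp_mul f b d _ hf, if_pos (by omega), Nat.add_sub_cancel]
    exact Submodule.add_mem_sup ⟨hA a ha _, homogeneousComponent_mem _ _⟩
      ⟨_, ⟨hB b hb s, homogeneousComponent_mem _ _⟩, rfl⟩
  · refine sup_le (inf_le_inf_right _ (show A ≤ A ⊔ Ideal.span {f} * B from le_sup_left)) ?_
    rintro _ ⟨b, ⟨hb, hbs⟩, rfl⟩
    refine ⟨?_, ?_⟩
    · exact (le_sup_right : _ ≤ A ⊔ Ideal.span {f} * B)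
        (Ideal.mem_span_singleton_mul.mpr ⟨b, hb, rfl⟩)
    · rw [add_comm]
      exact hf.mul hbs

lemma bdl_piece_inf {K : Type*} [Field K] {n : ℕ}
    (A B : Ideal (MvPolynomial (Fin n) K)) (hAB : A ≤ B)
    (f : MvPolynomial (Fin n) K) (d : ℕ) (hf : f.IsHomogeneous d)
    (hcolon : ∀ p, f * p ∈ A → p ∈ A) (s : ℕ) :
    bdlPiece A (s + d) ⊓ (bdlPiece B s).map (LinearMap.mulLeft K f) =
      (bdlPiece A s).map (LinearMap.mulLeft K f) := by
  apply le_antisymm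
  · rintro _ ⟨⟨hp, -⟩, ⟨b, ⟨hb, hbs⟩, rfl⟩⟩
    exact ⟨b, ⟨hcolon b hp, hbs⟩, rfl⟩
  · rintro _ ⟨b, ⟨hb, hbs⟩, rfl⟩
    refine ⟨⟨A.mul_mem_left f hb, ?_⟩, ⟨b, ⟨hAB hb, hbs⟩, rfl⟩⟩
    rw [add_comm]
    exact hf.mul hbs

lemma bdl_finrank {K : Type*} [Field K] {n : ℕ}
    (A B : Ideal (MvPolynomial (Fin n) K)) (hA : IsHomogeneousIdeal A)
    (hB : IsHomogeneousIdeal B) (hAB : A ≤ B)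
    (f : MvPolynomial (Fin n) K) (d : ℕ) (hf : f.IsHomogeneous d)
    (hcolon : ∀ p, f * p ∈ A → p ∈ A) (s : ℕ) :
    Module.finrank K (bdlPiece (A ⊔ Ideal.span {f} * B) (s + d))
      + Module.finrank K (bdlPiece A s) =
    Module.finrank K (bdlPiece A (s + d)) + Module.finrank K (bdlPiece B s) := by
  by_cases hf0 : f = 0
  · have hA1 : A = ⊤ := (Ideal.eq_top_iff_one A).mpr (hcolon 1 (by simp [hf0]))
    have hB1 : B = ⊤ := top_le_iff.mp (hA1 ▸ hAB)
    subst hA1 hB1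
    rw [top_sup_eq]
  · have hinj : Function.Injective (LinearMap.mulLeft K f) := fun x y h =>
      mul_left_cancel₀ hf0 h
    have hr : ∀ I : Ideal (MvPolynomial (Fin n) K),
        Module.finrank K ((bdlPiece I s).map (LinearMap.mulLeft K f)) =
          Module.finrank K (bdlPiece I s) := fun I =>
      (LinearEquiv.finrank_eq (Submodule.equivMapOfInjective _ hinj _)).symm
    have := bdl_finite_piece A (s + d)
    have := bdl_finite_piece B s
    have h := Submodule.finrank_sup_add_finrank_inf_eq (bdlPiece A (s + d))
      ((bdlPiece B s).map (LinearMap.mulLeft K f))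
    rwa [← bdl_piece_add A B hA hB f d hf s, bdl_piece_inf A B hAB f d hf hcolon s, hr, hr] at h

/-- Hilbert function of a Basic Double Link `C = A + f·B`:
if `A ⊆ B` are homogeneous ideals, `f` is homogeneous of degree `d` with `A : f = A`, then
`H_{R/C}(t) = H_{R/B}(t-d) + H_{R/A}(t) - H_{R/A}(t-d)` for all `t`, and equivalently
`H_C(t) = H_B(t-d) + H_A(t) - H_A(t-d)`. -/
theorem basicDoubleLink_hilbert {K : Type*} [Field K] {n : ℕ}
    (A B : Ideal (MvPolynomial (Fin n) K))
    (hA : IsHomogeneousIdeal A) (hB : IsHomogeneousIdeal B) (hAB : A ≤ B)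
    (f : MvPolynomial (Fin n) K) (d : ℕ) (hf : f.IsHomogeneous d)
    (hcolon : Submodule.colon A (Ideal.span {f}) = A)
    (C : Ideal (MvPolynomial (Fin n) K)) (hC : C = A ⊔ Ideal.span {f} * B) :
    (∀ t : ℤ, (quotHilbert C t : ℤ) =
        quotHilbert B (t - d) + quotHilbert A t - quotHilbert A (t - d)) ∧
    (∀ t : ℤ, (idealHilbert C t : ℤ) =
        idealHilbert B (t - d) + idealHilbert A t - idealHilbert A (t - d)) := by
  have hcol : ∀ p, f * p ∈ A → p ∈ A := by
    intro p hp
    rw [← hcolon]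
    exact Ideal.mem_colon_span_singleton.mpr (by rwa [mul_comm])
  have key : ∀ t : ℤ, (idealHilbert C t : ℤ) =
      idealHilbert B (t - d) + idealHilbert A t - idealHilbert A (t - d) := by
    intro t
    subst hC
    unfold idealHilbert
    by_cases h0 : t < 0
    · rw [if_pos h0, if_pos h0, if_pos (by omega), if_pos (by omega)]
      simp
    rw [if_neg h0, if_neg h0]
    by_cases h1 : t - d < 0
    · rw [if_pos h1, if_pos h1]
      have := bdl_piece_lt A B hA f d hf t.toNat (by omega)
      unfold bdlPiece at this
      rw [this]
      simp
    · rw [if_neg h1, if_neg h1]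
      have h := bdl_finrank A B hA hB hAB f d hf hcol (t - d).toNat
      rw [show (t - d).toNat + d = t.toNat by omega] at h
      unfold bdlPiece at h
      omega
  refine ⟨?_, key⟩
  have hrn : ∀ (I : Ideal (MvPolynomial (Fin n) K)) (t : ℤ),
      quotHilbert I t + idealHilbert I t =
        if t < 0 then 0 else Module.finrank K (homogeneousSubmodule (Fin n) K t.toNat) := by
    intro I t
    unfold quotHilbert idealHilbert
    split_ifs
    · rfl
    · exact bdl_rank_nullity I t.toNat
  intro t
  have k := key t
  have h1 := hrn C t
  have h2 := hrn A t
  have h3 := hrn A (t - d)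
  have h4 := hrn B (t - d)
  rw [← h2] at h1
  rw [← h4] at h3
  omega
end

section
/- Let X = (x_{ij}) be an m×n matrix of distinct indeterminates with m ≤ n, and let σ be a diagonal term order on K[X]. Then the set of maximal (m×m) minors of X is a Gröbner basis, with respect to σ, of the ideal I_m(X) they generate; in particular, in(I_m(X)) is generated by the squarefree monomials x_{1,j_1}x_{2,j_2}···x_{m,j_m} for all 1 ≤ j_1 < j_2 < ··· < j_m ≤ n. -/
open MvPolynomial

variable {K : Type*} [Field K]

/-- The leading exponent (multidegree) of a polynomial with respect to a monomial order. -/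
noncomputable def leadExp {σ : Type*} (m : MonomialOrder σ) (p : MvPolynomial σ K) : σ →₀ ℕ :=
  m.toSyn.symm (p.support.sup fun e => m.toSyn e)

/-- The initial ideal of `I` with respect to a monomial order. -/
noncomputable def initialIdeal {σ : Type*} (m : MonomialOrder σ)
    (I : Ideal (MvPolynomial σ K)) : Ideal (MvPolynomial σ K) :=
  Ideal.span ((fun p => (MvPolynomial.monomial (leadExp m p) (1 : K))) ''
    {p | p ∈ I ∧ p ≠ 0})

/-- A set `G` is a Gröbner basis of an ideal `J`. -/
def IsGroebnerBasis {σ : Type*} (m : MonomialOrder σ)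
    (J : Ideal (MvPolynomial σ K)) (G : Set (MvPolynomial σ K)) : Prop :=
  G ⊆ (J : Set (MvPolynomial σ K)) ∧
    Ideal.span ((fun p => (MvPolynomial.monomial (leadExp m p) (1 : K))) ''
      {p | p ∈ G ∧ p ≠ 0}) = initialIdeal m J

/-- The set of maximal minors of the generic `m × n` matrix `X = (x_{ij})`. -/
def maximalMinors (K : Type*) [Field K] (m n : ℕ) : Set (MvPolynomial (Fin m × Fin n) K) :=
  {p | ∃ c : Fin m → Fin n, StrictMono c ∧
    p = Matrix.det (Matrix.of fun i j : Fin m => (MvPolynomial.X (i, c j) :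
      MvPolynomial (Fin m × Fin n) K))}

/-- A monomial order on the variables of the generic `m × n` matrix is diagonal if the leading
term of the determinant of every square submatrix is the product of its diagonal entries. -/
def IsDiagonalOrder (K : Type*) [Field K] (m n : ℕ) (mo : MonomialOrder (Fin m × Fin n)) :
    Prop :=
  ∀ (k : ℕ) (r : Fin k → Fin m) (c : Fin k → Fin n), StrictMono r → StrictMono c →
    leadExp mo (Matrix.det (Matrix.of fun i j : Fin k => (MvPolynomial.X (r i, c j) :
        MvPolynomial (Fin m × Fin n) K))) = ∑ i : Fin k, Finsupp.single (r i, c i) 1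

set_option linter.unusedSimpArgs false
set_option linter.unnecessarySeqFocus false

namespace MaxMin

open Finsupp

/-- The exponent of the diagonal monomial of the columns `c`. -/
noncomputable def dg {m n : ℕ} (c : Fin m → Fin n) : Fin m × Fin n →₀ ℕ :=
  ∑ i : Fin m, Finsupp.single (i, c i) 1

/-- The maximal minor on the columns `c`. -/
noncomputable def mn (K : Type*) [Field K] {m n : ℕ} (c : Fin m → Fin n) :
    MvPolynomial (Fin m × Fin n) K :=
  Matrix.det (Matrix.of fun i j : Fin m => (MvPolynomial.X (i, c j) :
      MvPolynomial (Fin m × Fin n) K))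

lemma dg_apply {m n : ℕ} (c : Fin m → Fin n) (i : Fin m) (j : Fin n) :
    dg c (i, j) = if c i = j then 1 else 0 := by
  unfold dg
  rw [Finsupp.finsetSum_apply, Finset.sum_eq_single i]
  · by_cases h : c i = j <;> simp [h, Finsupp.single_apply]
  · intro b _ hb
    simp [Finsupp.single_apply, hb]
  · simp

lemma dg_le_iff {m n : ℕ} (c : Fin m → Fin n) (u : Fin m × Fin n →₀ ℕ) :
    dg c ≤ u ↔ ∀ i, 1 ≤ u (i, c i) := by
  constructor
  · intro h i
    have := h (i, c i)
    simpa [dg_apply] using this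
  · rintro h ⟨i, j⟩
    rw [dg_apply]
    split_ifs with hc
    · subst hc; exact h i
    · exact Nat.zero_le _

lemma monomial_dg {m n : ℕ} (c : Fin m → Fin n) :
    (monomial (dg c) (1 : K)) = ∏ i : Fin m, X (i, c i) := by
  unfold dg
  rw [MvPolynomial.monomial_sum_one]
  rfl

variable {m n : ℕ} {mo : MonomialOrder (Fin m × Fin n)}

lemma leadExp_mn (hdiag : IsDiagonalOrder K m n mo) {c : Fin m → Fin n} (hc : StrictMono c) :
    mo.degree (mn K c) = dg c :=
  hdiag m id c strictMono_id hc

lemma mn_ne_zero (hdiag : IsDiagonalOrder K m n mo) {c : Fin m → Fin n} (hc : StrictMono c) :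
    mn K c ≠ 0 := by
  intro h
  have h1 := leadExp_mn hdiag hc
  rw [h, MonomialOrder.degree_zero] at h1
  rcases Nat.eq_zero_or_pos m with hm | hm
  · subst hm
    simp [mn] at h
  · have := dg_apply c ⟨0, hm⟩ (c ⟨0, hm⟩)
    rw [← h1] at this
    simp at this

/-- The two by two exchange. -/
lemma swap_lt (hdiag : IsDiagonalOrder K m n mo) {r r' : Fin m} {a b : Fin n}
    (hr : r < r') (hab : a < b) :
    mo.toSyn (single (r, b) 1 + single (r', a) 1) <
      mo.toSyn (single (r, a) 1 + single (r', b) 1) := by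
  have h := hdiag 2 ![r, r'] ![a, b] (by
      rw [Fin.strictMono_iff_lt_succ]; intro i; fin_cases i; simpa using hr) (by
      rw [Fin.strictMono_iff_lt_succ]; intro i; fin_cases i; simpa using hab)
  rw [Matrix.det_fin_two, Fin.sum_univ_two] at h
  simp only [Matrix.of_apply, Matrix.cons_val_zero, Matrix.cons_val_one] at h
  have hne : (single (r, b) 1 + single (r', a) 1 : Fin m × Fin n →₀ ℕ) ≠
      single (r, a) 1 + single (r', b) 1 := by
    intro h
    have := DFunLike.congr_fun h (r, b)
    simp [Finsupp.single_apply, hab.ne, hr.ne'] at this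
  refine lt_of_le_of_ne ?_ (fun h => hne (mo.toSyn.injective h))
  rw [← h]
  change _ ≤ mo.toSyn (mo.degree _)
  apply mo.le_degree
  have e : ∀ s t : Fin m × Fin n, (X s * X t : MvPolynomial (Fin m × Fin n) K) =
      monomial (single s 1 + single t 1) 1 := by
    intro s t
    simp [X, monomial_mul]
  rw [e, e, MvPolynomial.mem_support_iff, coeff_sub, coeff_monomial, coeff_monomial, if_neg hne.symm, if_pos rfl]
  simp

/-- The `k`-th exponent in the Laplace relation with row `i` repeated. -/
noncomputable def tt (i : Fin m) (e : Fin (m + 1) → Fin n) (k : Fin (m + 1)) :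
    Fin m × Fin n →₀ ℕ := single (i, e k) 1 + dg (e ∘ k.succAbove)

lemma tt_split (i : Fin m) (e : Fin (m + 1) → Fin n) (j : Fin m) :
    ∃ R : Fin m × Fin n →₀ ℕ,
      tt i e j.castSucc = R + (single (i, e j.castSucc) 1 + single (j, e j.succ) 1) ∧
      tt i e j.succ = R + (single (i, e j.succ) 1 + single (j, e j.castSucc) 1) := by
  refine ⟨∑ r ∈ Finset.univ.erase j, single (r, e (j.castSucc.succAbove r)) 1, ?_, ?_⟩
  · unfold tt dg
    rw [← Finset.add_sum_erase _ _ (Finset.mem_univ j)]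
    simp only [Function.comp, Fin.succAbove_castSucc_self]
    abel
  · unfold tt dg
    rw [← Finset.add_sum_erase _ _ (Finset.mem_univ j)]
    have : ∑ r ∈ Finset.univ.erase j, single (r, e (j.castSucc.succAbove r)) 1 =
        ∑ r ∈ Finset.univ.erase j, (single (r, e (j.succ.succAbove r)) 1 :
          Fin m × Fin n →₀ ℕ) := by
      refine Finset.sum_congr rfl fun r hr => ?_
      have hr := Finset.ne_of_mem_erase hr
      congr 3
      rcases lt_or_gt_of_ne hr with h | h
      · rw [Fin.succAbove_of_castSucc_lt _ _ (by simpa using h),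
          Fin.succAbove_of_castSucc_lt _ _ (by simp only [Fin.lt_def, Fin.le_def, Fin.val_castSucc, Fin.val_succ] at h ⊢ <;> omega)]
      · rw [Fin.succAbove_of_le_castSucc _ _ (by simpa using h.le),
          Fin.succAbove_of_le_castSucc _ _ (by simp only [Fin.lt_def, Fin.le_def, Fin.val_castSucc, Fin.val_succ] at h ⊢ <;> omega)]
    rw [this]
    simp only [Function.comp, Fin.succAbove_succ_self]
    abel

lemma tt_up (hdiag : IsDiagonalOrder K m n mo) {i : Fin m} {e : Fin (m + 1) → Fin n}
    (he : StrictMono e) {j : Fin m} (hj : j < i) :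
    mo.toSyn (tt i e j.castSucc) < mo.toSyn (tt i e j.succ) := by
  obtain ⟨R, h1, h2⟩ := tt_split i e j
  rw [h1, h2, map_add, map_add mo.toSyn R]
  have := swap_lt hdiag hj (he j.castSucc_lt_succ)
  rw [add_comm (single (i, _) 1), add_comm (single (i, _) 1)]
  gcongr

lemma tt_down (hdiag : IsDiagonalOrder K m n mo) {i : Fin m} {e : Fin (m + 1) → Fin n}
    (he : StrictMono e) {j : Fin m} (hj : i < j) :
    mo.toSyn (tt i e j.succ) < mo.toSyn (tt i e j.castSucc) := by
  obtain ⟨R, h1, h2⟩ := tt_split i e j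
  rw [h1, h2, map_add, map_add mo.toSyn R]
  have := swap_lt hdiag hj (he j.castSucc_lt_succ)
  gcongr

lemma tt_eq (i : Fin m) (e : Fin (m + 1) → Fin n) : tt i e i.succ = tt i e i.castSucc := by
  obtain ⟨R, h1, h2⟩ := tt_split i e i
  rw [h1, h2, add_comm (single (i, e i.succ) 1)]

lemma tt_lt (hdiag : IsDiagonalOrder K m n mo) {i : Fin m} {e : Fin (m + 1) → Fin n}
    (he : StrictMono e) {k : Fin (m + 1)} (h1 : k ≠ i.castSucc) (h2 : k ≠ i.succ) :
    mo.toSyn (tt i e k) < mo.toSyn (tt i e i.castSucc) := by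
  have hup : ∀ d : ℕ, ∀ j : ℕ, ∀ hj : j + d + 1 = i.val,
      mo.toSyn (tt i e ⟨j, by omega⟩) < mo.toSyn (tt i e i.castSucc) := by
    intro d
    induction d with
    | zero =>
      intro j hj
      have := tt_up hdiag he (i := i) (j := ⟨j, by omega⟩) (by simp only [Fin.lt_def, Fin.le_def, Fin.val_castSucc, Fin.val_succ] <;> omega)
      have h3 : (Fin.succ ⟨j, by omega⟩ : Fin (m + 1)) = i.castSucc := by
        ext; simp; omega
      rw [h3] at this
      exact this
    | succ d ih =>
      intro j hj
      have := tt_up hdiag he (i := i) (j := ⟨j, by omega⟩) (by simp only [Fin.lt_def, Fin.le_def, Fin.val_castSucc, Fin.val_succ] <;> omega)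
      exact this.trans (ih (j + 1) (by omega))
  have hdown : ∀ d : ℕ, ∀ hj : i.val + 2 + d < m + 1,
      mo.toSyn (tt i e ⟨i.val + 2 + d, hj⟩) < mo.toSyn (tt i e i.castSucc) := by
    intro d
    induction d with
    | zero =>
      intro hj
      have := tt_down hdiag he (i := i) (j := ⟨i.val + 1, by omega⟩) (by simp only [Fin.lt_def, Fin.le_def, Fin.val_castSucc, Fin.val_succ] <;> omega)
      rw [← tt_eq]
      exact this
    | succ d ih =>
      intro hj
      have := tt_down hdiag he (i := i) (j := ⟨i.val + 2 + d, by omega⟩)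
        (by simp only [Fin.lt_def, Fin.le_def, Fin.val_castSucc, Fin.val_succ] <;> omega)
      exact this.trans (ih (by omega))
  have h1' : k.val ≠ i.val := fun h => h1 (Fin.ext h)
  have h2' : k.val ≠ i.val + 1 := fun h => h2 (Fin.ext h)
  rcases lt_or_gt_of_ne h1' with h | h
  · exact hup (i.val - k.val - 1) k.val (by omega)
  · have := hdown (k.val - i.val - 2) (by omega)
    have h3 : (⟨i.val + 2 + (k.val - i.val - 2), by omega⟩ : Fin (m + 1)) = k := by
      ext; simp; omega
    rwa [h3] at this

lemma laplace (i : Fin m) (e : Fin (m + 1) → Fin n) :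
    ∑ k : Fin (m + 1), (-1) ^ (k : ℕ) * X (i, e k) * mn K (e ∘ k.succAbove) = 0 := by
  let M : Matrix (Fin (m + 1)) (Fin (m + 1)) (MvPolynomial (Fin m × Fin n) K) :=
    Matrix.of (Fin.cons (fun k => X (i, e k)) (fun r k => X (r, e k)))
  have h0 : M.det = 0 := by
    apply Matrix.det_zero_of_row_eq (i := 0) (j := i.succ) (Fin.succ_ne_zero i).symm
    ext k
    simp [M]
  rw [Matrix.det_succ_row_zero] at h0
  exact h0

/-- Span of the products of monomials with minors, with leading exponent below `s`. -/
noncomputable def Vlt (K : Type*) [Field K] (mo : MonomialOrder (Fin m × Fin n)) (s : mo.syn) :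
    Submodule K (MvPolynomial (Fin m × Fin n) K) :=
  Submodule.span K {p | ∃ w c, StrictMono c ∧ mo.toSyn (w + dg c) < s ∧
    p = monomial w 1 * mn K c}

/-- The product of the minor with the complementary monomial. -/
noncomputable def FF (K : Type*) [Field K] (u : Fin m × Fin n →₀ ℕ) (c : Fin m → Fin n) :
    MvPolynomial (Fin m × Fin n) K := monomial (u - dg c) 1 * mn K c

lemma merge {c c' : Fin m → Fin n} (hc : StrictMono c) (hc' : StrictMono c') (i : Fin m)
    (hi : c i < c' i) (hj : ∀ j, j ≠ i → c j = c' j) :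
    ∃ e : Fin (m + 1) → Fin n, StrictMono e ∧ e ∘ i.castSucc.succAbove = c' ∧
      e ∘ i.succ.succAbove = c ∧ e i.castSucc = c i ∧ e i.succ = c' i := by
  let e : Fin (m + 1) → Fin n := fun k =>
    if h : k.val ≤ i.val then c ⟨k.val, by omega⟩ else c' ⟨k.val - 1, by omega⟩
  have e1 : ∀ j : Fin m, j ≤ i → e j.castSucc = c j := by
    intro j h
    have h : j.val ≤ i.val := h
    simp [e, h]
  have e2 : ∀ j : Fin m, i ≤ j → e j.succ = c' j := by
    intro j h
    have h : i.val ≤ j.val := h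
    simp [e, show ¬ (j.val + 1 ≤ i.val) by omega]
  have e3 : ∀ j : Fin m, i < j → e j.castSucc = c' ⟨j.val - 1, by omega⟩ := by
    intro j h
    have h : i.val < j.val := h
    simp [e, show ¬ (j.val ≤ i.val) by omega]
  have e4 : ∀ j : Fin m, ∀ h : j < i, e j.succ = c ⟨j.val + 1, by omega⟩ := by
    intro j h
    have h : j.val < i.val := h
    simp [e, show (j.val + 1 ≤ i.val) by omega]
  refine ⟨e, ?_, ?_, ?_, e1 i le_rfl, e2 i le_rfl⟩
  · rw [Fin.strictMono_iff_lt_succ]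
    intro j
    rcases lt_trichotomy j i with h | h | h
    · rw [e1 j h.le, e4 j h]
      exact hc (by simp only [Fin.lt_def, Fin.le_def, Fin.val_castSucc, Fin.val_succ] <;> omega)
    · subst h
      rw [e1 j le_rfl, e2 j le_rfl]
      exact hi
    · rw [e3 j h, e2 j h.le]
      have h : i.val < j.val := h
      exact hc' (by simp only [Fin.lt_def, Fin.le_def, Fin.val_castSucc, Fin.val_succ] <;> omega)
  · funext r
    rcases lt_or_ge r i with h | h
    · rw [Function.comp, Fin.succAbove_of_castSucc_lt _ _ (by simpa using h), e1 r h.le, hj r h.ne]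
    · rw [Function.comp, Fin.succAbove_of_le_castSucc _ _ (by simpa using h), e2 r h]
  · funext r
    rcases le_or_gt r i with h | h
    · rw [Function.comp, Fin.succAbove_of_castSucc_lt _ _
        (by simp only [Fin.lt_def, Fin.le_def, Fin.val_castSucc, Fin.val_succ] at h ⊢ <;> omega), e1 r h]
    · rw [Function.comp, Fin.succAbove_of_le_castSucc _ _
        (by simp only [Fin.lt_def, Fin.le_def, Fin.val_castSucc, Fin.val_succ] at h ⊢ <;> omega), e2 r h.le, hj r h.ne']

lemma adj (hdiag : IsDiagonalOrder K m n mo) {c c' : Fin m → Fin n} (hc : StrictMono c)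
    (hc' : StrictMono c') (i : Fin m)
    (hi : c i < c' i) (hj : ∀ j, j ≠ i → c j = c' j) {u : Fin m × Fin n →₀ ℕ}
    (hu : dg c ≤ u) (hu' : dg c' ≤ u) : FF K u c' - FF K u c ∈ Vlt K mo (mo.toSyn u) := by
  obtain ⟨e, he, h1, h2, h3, h4⟩ := merge hc hc' i hi hj
  have hw : tt i e i.castSucc ≤ u := by
    rw [tt, h1, h3]
    rintro ⟨a, b⟩
    rw [dg_le_iff] at hu hu'
    rw [Finsupp.add_apply, dg_apply, Finsupp.single_apply]
    by_cases hab : (i, c i) = (a, b)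
    · simp only [Prod.mk.injEq] at hab
      obtain ⟨rfl, rfl⟩ := hab
      simpa [hi.ne'] using hu i
    · rw [if_neg hab]
      split_ifs with h
      · subst h; simpa using hu' a
      · simp
  obtain ⟨w, rfl⟩ := exists_add_of_le hw
  set t := tt i e i.castSucc with ht
  have ht' : t = single (i, c i) 1 + dg c' := by rw [ht, tt, h1, h3]
  have ht2 : t = single (i, c' i) 1 + dg c := by rw [ht, ← tt_eq, tt, h2, h4]
  let g : Fin (m + 1) → MvPolynomial (Fin m × Fin n) K := fun k =>
    monomial (w + single (i, e k) 1) 1 * mn K (e ∘ k.succAbove)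
  have hF' : FF K (t + w) c' = g i.castSucc := by
    simp only [g, FF, h1, h3]
    congr 2
    rw [ht']
    rw [show single (i, c i) 1 + dg c' + w = (w + single (i, c i) 1) + dg c' by abel,
      add_tsub_cancel_right]
  have hF : FF K (t + w) c = g i.succ := by
    simp only [g, FF, h2, h4]
    congr 2
    rw [ht2]
    rw [show single (i, c' i) 1 + dg c + w = (w + single (i, c' i) 1) + dg c by abel,
      add_tsub_cancel_right]
  have hg : ∀ k, k ≠ i.castSucc → k ≠ i.succ → g k ∈ Vlt K mo (mo.toSyn (t + w)) := by
    intro k hk1 hk2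
    refine Submodule.subset_span ⟨_, _, he.comp (Fin.strictMono_succAbove k), ?_, rfl⟩
    have := tt_lt hdiag he hk1 hk2
    rw [add_assoc, add_comm w, map_add, map_add mo.toSyn t]
    exact add_lt_add_left this _
  have hsum : ∑ k : Fin (m + 1), ((-1 : K) ^ (k : ℕ)) • g k = 0 := by
    have := congrArg (fun p => monomial w (1 : K) * p) (laplace (K := K) i e)
    simp only [mul_zero, Finset.mul_sum] at this
    rw [← this]
    refine Finset.sum_congr rfl fun k _ => ?_
    simp only [g]
    rw [show monomial (w + single (i, e k) 1) (1 : K) = monomial w 1 * X (i, e k) by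
      simp [X, monomial_mul], MvPolynomial.smul_eq_C_mul]
    simp only [map_pow, map_neg, map_one]
    ring
  have hne : i.succ ≠ i.castSucc := (Fin.castSucc_lt_succ).ne'
  rw [← Finset.add_sum_erase _ _ (Finset.mem_univ i.castSucc),
    ← Finset.add_sum_erase _ _ (Finset.mem_erase.2 ⟨hne, Finset.mem_univ i.succ⟩)] at hsum
  have hrest : ∑ k ∈ (Finset.univ.erase i.castSucc).erase i.succ, ((-1 : K) ^ (k : ℕ)) • g k ∈
      Vlt K mo (mo.toSyn (t + w)) := by
    refine Submodule.sum_mem _ fun k hk => Submodule.smul_mem _ _ ?_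
    simp only [Finset.mem_erase] at hk
    exact hg k hk.2.1 hk.1
  rw [hF, hF']
  rw [← add_assoc] at hsum
  have h5 := eq_neg_of_add_eq_zero_left hsum
  have h6 : ((-1 : K) ^ (i : ℕ)) • (g i.castSucc - g i.succ) ∈ Vlt K mo (mo.toSyn (t + w)) := by
    have : ((-1 : K) ^ (i : ℕ)) • (g i.castSucc - g i.succ) =
      -∑ k ∈ (Finset.univ.erase i.castSucc).erase i.succ, ((-1 : K) ^ (k : ℕ)) • g k := by
      rw [← h5]
      simp only [Fin.val_castSucc, Fin.val_succ, pow_succ]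
      rw [smul_sub, mul_neg_one, neg_smul, sub_eq_add_neg]
    rw [this]
    exact Submodule.neg_mem _ hrest
  exact (Submodule.smul_mem_iff _ (pow_ne_zero _ (by simp))).1 h6

lemma path_le (hdiag : IsDiagonalOrder K m n mo) {c c' : Fin m → Fin n} (hc : StrictMono c)
    (hc' : StrictMono c') (hle : ∀ i, c' i ≤ c i) {u : Fin m × Fin n →₀ ℕ}
    (hu : dg c ≤ u) (hu' : dg c' ≤ u) : FF K u c - FF K u c' ∈ Vlt K mo (mo.toSyn u) := by
  let P : ℕ → Fin m → Fin n := fun k j => if j.val < k then c' j else c j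
  have hP : ∀ k, StrictMono (P k) := by
    intro k a b hab
    have h : a.val < b.val := hab
    simp only [P]
    split_ifs with h1 h2
    · exact hc' hab
    · exact (hle a).trans_lt (hc hab)
    · omega
    · exact hc hab
  have hPu : ∀ k, dg (P k) ≤ u := by
    intro k
    rw [dg_le_iff] at *
    intro j
    simp only [P]
    split_ifs
    · exact hu' j
    · exact hu j
  have key : ∀ k, k ≤ m → FF K u c - FF K u (P k) ∈ Vlt K mo (mo.toSyn u) := by
    intro k
    induction k with
    | zero =>
      intro _
      have : P 0 = c := by funext j; simp [P]
      rw [this, sub_self]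
      exact Submodule.zero_mem _
    | succ k ih =>
      intro hk
      have h1 := ih (by omega)
      have h2 : FF K u (P k) - FF K u (P (k + 1)) ∈ Vlt K mo (mo.toSyn u) := by
        have ha : P (k + 1) ⟨k, hk⟩ = c' ⟨k, hk⟩ := by simp [P]
        have hb : P k ⟨k, hk⟩ = c ⟨k, hk⟩ := by simp [P]
        have hother : ∀ j : Fin m, j ≠ ⟨k, hk⟩ → P (k + 1) j = P k j := by
          intro j hj
          have : j.val ≠ k := fun h => hj (Fin.ext h)
          simp only [P]
          split_ifs <;> first | rfl | omega
        rcases (hle ⟨k, hk⟩).lt_or_eq with h | h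
        · exact adj hdiag (hP _) (hP _) ⟨k, hk⟩ (by rw [ha, hb]; exact h) hother (hPu _) (hPu _)
        · have : P (k + 1) = P k := by
            funext j
            by_cases hj : j = ⟨k, hk⟩
            · rw [hj, ha, hb, h]
            · exact hother j hj
          rw [this, sub_self]
          exact Submodule.zero_mem _
      have := Submodule.add_mem _ h1 h2
      simpa using this
  have := key m le_rfl
  have hPm : P m = c' := by funext j; simp [P]
  rwa [hPm] at this

lemma path (hdiag : IsDiagonalOrder K m n mo) {c c' : Fin m → Fin n} (hc : StrictMono c)
    (hc' : StrictMono c') {u : Fin m × Fin n →₀ ℕ}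
    (hu : dg c ≤ u) (hu' : dg c' ≤ u) : FF K u c - FF K u c' ∈ Vlt K mo (mo.toSyn u) := by
  let d : Fin m → Fin n := fun i => min (c i) (c' i)
  have hd : StrictMono d := fun a b hab => min_lt_min (hc hab) (hc' hab)
  have hdu : dg d ≤ u := by
    rw [dg_le_iff] at *
    intro i
    simp only [d]
    rcases min_choice (c i) (c' i) with h | h <;> rw [h]
    · exact hu i
    · exact hu' i
  have h1 := path_le hdiag hc hd (fun i => min_le_left _ _) hu hdu
  have h2 := path_le hdiag hc' hd (fun i => min_le_right _ _) hu' hdu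
  have := Submodule.sub_mem _ h1 h2
  simpa using this

lemma Vlt_mono {s t : mo.syn} (h : s ≤ t) : Vlt K mo s ≤ Vlt K mo t := by
  apply Submodule.span_mono
  rintro p ⟨w, c, h1, h2, h3⟩
  exact ⟨w, c, h1, h2.trans_le h, h3⟩

lemma degree_mul_mn (hdiag : IsDiagonalOrder K m n mo) {c : Fin m → Fin n} (hc : StrictMono c)
    (w : Fin m × Fin n →₀ ℕ) : mo.degree (monomial w (1 : K) * mn K c) = w + dg c := by
  classical
  rw [mo.degree_mul (by simp) (mn_ne_zero hdiag hc), leadExp_mn hdiag hc, mo.degree_monomial]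
  simp

/-- Elements of `Vlt u` vanish at the exponents from `u` on. -/
lemma coeff_Vlt (hdiag : IsDiagonalOrder K m n mo) {u v : Fin m × Fin n →₀ ℕ}
    (huv : mo.toSyn u ≤ mo.toSyn v) {f : MvPolynomial (Fin m × Fin n) K}
    (hf : f ∈ Vlt K mo (mo.toSyn u)) : f.coeff v = 0 := by
  induction hf using Submodule.span_induction with
  | mem x h =>
    obtain ⟨w, c, hc, hlt, rfl⟩ := h
    apply mo.coeff_eq_zero_of_lt
    rw [degree_mul_mn hdiag hc]
    exact hlt.trans_le huv
  | zero => simp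
  | add x y _ _ hx hy => simp [hx, hy]
  | smul a x _ hx => simp [hx]

/-- Decomposition of an element of the ideal. -/
lemma decomp (hdiag : IsDiagonalOrder K m n mo) {f : MvPolynomial (Fin m × Fin n) K}
    (s : mo.syn) (hf : f ∈ Vlt K mo s) :
    f = 0 ∨ ∃ u c, StrictMono c ∧ dg c ≤ u ∧ mo.toSyn u < s ∧ ∃ a : K,
      f - a • FF K u c ∈ Vlt K mo (mo.toSyn u) := by
  induction hf using Submodule.span_induction with
  | mem x h =>
    obtain ⟨w, c, hc, hlt, rfl⟩ := h
    right
    refine ⟨w + dg c, c, hc, le_add_self, hlt, 1, ?_⟩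
    rw [FF, add_tsub_cancel_right, one_smul, sub_self]
    exact Submodule.zero_mem _
  | zero => left; rfl
  | add x y _ _ hx hy =>
    rcases hx with rfl | ⟨u, c, hc, hcu, hus, a, ha⟩
    · simpa using hy
    rcases hy with rfl | ⟨u', c', hc', hcu', hus', a', ha'⟩
    · right
      exact ⟨u, c, hc, hcu, hus, a, by simpa using ha⟩
    right
    have aux : ∀ (x : MvPolynomial (Fin m × Fin n) K) (u u' : Fin m × Fin n →₀ ℕ)
        (c : Fin m → Fin n) (a : K), StrictMono c → dg c ≤ u → mo.toSyn u < mo.toSyn u' →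
        x - a • FF K u c ∈ Vlt K mo (mo.toSyn u) → x ∈ Vlt K mo (mo.toSyn u') := by
      intro x u u' c a hc hcu hlt hx
      have h1 := Vlt_mono hlt.le hx
      have h2 : FF K u c ∈ Vlt K mo (mo.toSyn u') :=
        Submodule.subset_span ⟨_, c, hc, by rwa [tsub_add_cancel_of_le hcu], rfl⟩
      have := Submodule.add_mem _ h1 (Submodule.smul_mem _ a h2)
      simpa using this
    rcases lt_trichotomy (mo.toSyn u) (mo.toSyn u') with h | h | h
    · refine ⟨u', c', hc', hcu', hus', a', ?_⟩
      have := Submodule.add_mem _ (aux x u u' c a hc hcu h ha) ha'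
      rwa [← add_sub_assoc] at this
    · have h := mo.toSyn.injective h
      subst h
      refine ⟨u, c, hc, hcu, hus, a + a', ?_⟩
      have := Submodule.sub_mem _ (Submodule.add_mem _ ha ha')
        (Submodule.smul_mem _ a' (path hdiag hc hc' hcu hcu'))
      convert this using 1
      rw [add_smul, smul_sub]
      abel
    · refine ⟨u, c, hc, hcu, hus, a, ?_⟩
      have := Submodule.add_mem _ ha (aux y u' u c' a' hc' hcu' h ha')
      convert this using 1
      abel
  | smul b x _ hx =>
    rcases hx with rfl | ⟨u, c, hc, hcu, hus, a, ha⟩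
    · left; simp
    · right
      refine ⟨u, c, hc, hcu, hus, b * a, ?_⟩
      have := Submodule.smul_mem _ b ha
      rwa [smul_sub, smul_smul] at this

lemma degree_Vlt (hdiag : IsDiagonalOrder K m n mo) (s : mo.syn) :
    ∀ f : MvPolynomial (Fin m × Fin n) K, f ∈ Vlt K mo s → f ≠ 0 →
      ∃ c, StrictMono c ∧ dg c ≤ mo.degree f := by
  induction s using WellFoundedLT.induction with
  | ind s ih =>
    intro f hf hf0
    rcases decomp hdiag s hf with h | ⟨u, c, hc, hcu, hus, a, ha⟩
    · exact absurd h hf0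
    by_cases h0 : a = 0
    · subst h0
      rw [zero_smul, sub_zero] at ha
      exact ih _ hus f ha hf0
    · refine ⟨c, hc, ?_⟩
      suffices mo.degree f = u by rwa [this]
      have hdF : mo.degree (FF K u c) = u := by
        rw [FF, degree_mul_mn hdiag hc, tsub_add_cancel_of_le hcu]
      have hF0 : FF K u c ≠ 0 := mul_ne_zero (by simp) (mn_ne_zero hdiag hc)
      have hcoeff : ∀ v, mo.toSyn u ≤ mo.toSyn v → f.coeff v = a * (FF K u c).coeff v := by
        intro v hv
        have := coeff_Vlt hdiag hv ha
        rw [coeff_sub, coeff_smul, smul_eq_mul] at this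
        exact sub_eq_zero.1 this
      apply mo.toSyn.injective
      apply le_antisymm
      · by_contra hlt
        rw [not_le] at hlt
        have h1 := hcoeff _ hlt.le
        rw [mo.coeff_eq_zero_of_lt (f := FF K u c) (by rw [hdF]; exact hlt), mul_zero] at h1
        exact (mo.coeff_degree_ne_zero_iff.2 hf0) h1
      · apply mo.le_degree
        rw [MvPolynomial.mem_support_iff, hcoeff u le_rfl]
        refine mul_ne_zero h0 ?_
        have := mo.coeff_degree_ne_zero_iff.2 hF0
        rwa [hdF] at this

lemma monomial_mul_Vlt {f : MvPolynomial (Fin m × Fin n) K} (w : Fin m × Fin n →₀ ℕ) (a : K)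
    {s : mo.syn} (hf : f ∈ Vlt K mo s) : monomial w a * f ∈ Vlt K mo (mo.toSyn w + s) := by
  induction hf using Submodule.span_induction with
  | mem x h =>
    obtain ⟨v, c, hc, hlt, rfl⟩ := h
    have h1 : monomial w a * (monomial v 1 * mn K c) = a • (monomial (w + v) 1 * mn K c) := by
      rw [← mul_assoc, monomial_mul, mul_one, ← smul_mul_assoc, smul_monomial, smul_eq_mul, mul_one]
    rw [h1]
    refine Submodule.smul_mem _ _ (Submodule.subset_span ⟨w + v, c, hc, ?_, rfl⟩)
    rw [add_assoc, map_add]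
    gcongr
  | zero => simp
  | add x y _ _ hx hy => rw [mul_add]; exact Submodule.add_mem _ hx hy
  | smul b x _ hx => rw [mul_smul_comm]; exact Submodule.smul_mem _ _ hx

lemma exists_Vlt (z : Fin m × Fin n) {f : MvPolynomial (Fin m × Fin n) K}
    (hf : f ∈ Ideal.span (maximalMinors K m n)) : ∃ s, f ∈ Vlt K mo s := by
  have hadd : ∀ x y : MvPolynomial (Fin m × Fin n) K, (∃ s, x ∈ Vlt K mo s) →
      (∃ s, y ∈ Vlt K mo s) → ∃ s, x + y ∈ Vlt K mo s := by
    rintro x y ⟨s, hs⟩ ⟨t, ht⟩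
    exact ⟨max s t, Submodule.add_mem _ (Vlt_mono (le_max_left _ _) hs)
      (Vlt_mono (le_max_right _ _) ht)⟩
  induction hf using Submodule.span_induction with
  | mem x h =>
    obtain ⟨c, hc, rfl⟩ := h
    refine ⟨mo.toSyn (dg c + single z 1), Submodule.subset_span ⟨0, c, hc, ?_, ?_⟩⟩
    · rw [zero_add, map_add]
      apply lt_add_of_pos_right
      rw [mo.toSyn_lt_iff_ne_zero]
      simp
    · rw [monomial_zero', C_1, one_mul]
      rfl
  | zero => exact ⟨0, Submodule.zero_mem _⟩
  | add x y _ _ hx hy => exact hadd x y hx hy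
  | smul a x _ hx =>
    obtain ⟨s, hs⟩ := hx
    rw [smul_eq_mul]
    induction a using MvPolynomial.induction_on' with
    | monomial w r => exact ⟨_, monomial_mul_Vlt w r hs⟩
    | add p q hp hq => rw [add_mul]; exact hadd _ _ hp hq

lemma degree_mem (hmn : m ≤ n) (hdiag : IsDiagonalOrder K m n mo)
    {f : MvPolynomial (Fin m × Fin n) K}
    (hf : f ∈ Ideal.span (maximalMinors K m n)) (hf0 : f ≠ 0) :
    ∃ c, StrictMono c ∧ dg c ≤ mo.degree f := by
  rcases Nat.eq_zero_or_pos m with hm | hm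
  · subst hm
    exact ⟨Fin.elim0, fun a => a.elim0, by simp [dg]⟩
  · obtain ⟨s, hs⟩ := exists_Vlt (mo := mo) (⟨0, hm⟩, ⟨0, by omega⟩) hf
    exact degree_Vlt hdiag s f hs hf0

end MaxMin

/-- The maximal minors of a generic `m × n` matrix (`m ≤ n`) are a Gröbner
basis of the ideal they generate with respect to any diagonal term order; in particular, the
initial ideal is generated by the squarefree monomials `x_{1,j_1} x_{2,j_2} ⋯ x_{m,j_m}`
with `j_1 < j_2 < ⋯ < j_m`. -/
theorem maximalMinors_groebner (m n : ℕ) (hmn : m ≤ n)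
    (mo : MonomialOrder (Fin m × Fin n)) (hdiag : IsDiagonalOrder K m n mo) :
    IsGroebnerBasis mo (Ideal.span (maximalMinors K m n)) (maximalMinors K m n) ∧
    initialIdeal mo (Ideal.span (maximalMinors K m n)) =
      Ideal.span {q : MvPolynomial (Fin m × Fin n) K | ∃ c : Fin m → Fin n, StrictMono c ∧
        q = ∏ i : Fin m, MvPolynomial.X (i, c i)} := by
  have key : initialIdeal mo (Ideal.span (maximalMinors K m n)) ≤
      Ideal.span {q : MvPolynomial (Fin m × Fin n) K | ∃ c : Fin m → Fin n, StrictMono c ∧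
        q = ∏ i : Fin m, MvPolynomial.X (i, c i)} := by
    refine Ideal.span_le.2 ?_
    rintro _ ⟨p, ⟨hp, hp0⟩, rfl⟩
    obtain ⟨c, hc, hle⟩ := MaxMin.degree_mem (mo := mo) hmn hdiag hp hp0
    obtain ⟨w, hw⟩ := exists_add_of_le hle
    have h1 : (monomial (leadExp mo p) (1 : K)) = monomial w 1 * ∏ i : Fin m, X (i, c i) := by
      change (monomial (mo.degree p) (1 : K)) = _
      rw [hw, ← MaxMin.monomial_dg, monomial_mul, one_mul, add_comm]
    simp only [h1]
    exact Ideal.mul_mem_left _ _ (Ideal.subset_span ⟨c, hc, rfl⟩)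
  have h2 : Ideal.span {q : MvPolynomial (Fin m × Fin n) K | ∃ c : Fin m → Fin n, StrictMono c ∧
        q = ∏ i : Fin m, MvPolynomial.X (i, c i)} ≤
      Ideal.span ((fun p => (MvPolynomial.monomial (leadExp mo p) (1 : K))) ''
        {p | p ∈ maximalMinors K m n ∧ p ≠ 0}) := by
    refine Ideal.span_mono ?_
    rintro _ ⟨c, hc, rfl⟩
    refine ⟨MaxMin.mn K c, ⟨⟨c, hc, rfl⟩, MaxMin.mn_ne_zero hdiag hc⟩, ?_⟩
    rw [← MaxMin.monomial_dg, ← MaxMin.leadExp_mn hdiag hc]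
    rfl
  have h3 : Ideal.span ((fun p => (MvPolynomial.monomial (leadExp mo p) (1 : K))) ''
        {p | p ∈ maximalMinors K m n ∧ p ≠ 0}) ≤
      initialIdeal mo (Ideal.span (maximalMinors K m n)) := by
    refine Ideal.span_mono (Set.image_mono ?_)
    rintro p ⟨hp, hp0⟩
    exact ⟨Ideal.subset_span hp, hp0⟩
  exact ⟨⟨Ideal.subset_span, le_antisymm h3 (key.trans h2)⟩, le_antisymm key (h2.trans h3)⟩
end

section
/- Let X be an m×n matrix of indeterminates (m ≤ n), L the variables of a one-sided ladder L of X with distinguished points (a_1,b_1),...,(a_s,b_s), sizes t = (t_1,...,t_s), and let I_t(L) = I_{t_1}(L_1) + ... + I_{t_s}(L_s) ⊂ K[X] be the mixed ladder determinantal ideal. Then I_t(L) is a prime ideal and K[X]/I_t(L) is Cohen-Macaulay. -/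
open MvPolynomial

variable {K : Type*} [Field K]

/-- The region `L_i = {(x,y) : 1 ≤ x ≤ a_i, b_i ≤ y ≤ n}` of the `m × n` grid determined by a
distinguished point `(a_i, b_i)` (matrix coordinates are 1-based). -/
def ladderRegion (a b : ℕ → ℕ) (n : ℕ) (i : ℕ) : Set (ℕ × ℕ) :=
  {p | 1 ≤ p.1 ∧ p.1 ≤ a i ∧ b i ≤ p.2 ∧ p.2 ≤ n}

/-- The mixed ladder determinantal ideal `I_t(L) = I_{t_1}(L_1) + ⋯ + I_{t_s}(L_s)` in the
polynomial ring on the variables indexed by `V`: for each `i`, one takes the `t_i × t_i`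
minors of the generic matrix whose entries lie in the region `L_i`. -/
noncomputable def mixedLadderIdeal (K : Type*) [Field K] (V : Set (ℕ × ℕ))
    (a b t : ℕ → ℕ) (n s : ℕ) : Ideal (MvPolynomial V K) :=
  ⨆ i ∈ Set.Icc 1 s, Ideal.span
    {p | ∃ r c : Fin (t i) → ℕ, StrictMono r ∧ StrictMono c ∧
      ∃ h : ∀ x y : Fin (t i), (r x, c y) ∈ ladderRegion a b n i ∧ (r x, c y) ∈ V,
      p = Matrix.det (Matrix.of fun x y => (MvPolynomial.X ⟨(r x, c y), (h x y).2⟩ :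
        MvPolynomial V K))}

set_option synthInstance.maxHeartbeats 1000000 in
/-- `R/I` is Cohen-Macaulay: there is a regular sequence on `R/I`, consisting of elements of
the irrelevant maximal ideal, whose length equals the Krull dimension of `R/I`. -/
def QuotientIsCohenMacaulay {σ : Type*} (I : Ideal (MvPolynomial σ K)) : Prop :=
  ∃ rs : List (MvPolynomial σ K ⧸ I),
    (∀ x ∈ rs, x ∈ (Ideal.span (Set.range (MvPolynomial.X : σ → MvPolynomial σ K))).map
      (Ideal.Quotient.mk I)) ∧
    RingTheory.Sequence.IsRegular (MvPolynomial σ K ⧸ I) rs ∧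
    (rs.length : WithBot ℕ∞) = ringKrullDim (MvPolynomial σ K ⧸ I)


universe u



open CategoryTheory Abelian in
/-- vanishing of the first `d` Ext groups -/
def LD.ExtDepth {R : Type u} [CommRing R] (k : ModuleCat.{u} R) (M : Type u) [AddCommGroup M]
    [Module R M] (d : ℕ) : Prop :=
  ∀ i < d, Subsingleton (Ext k (ModuleCat.of R M) i)

namespace LD

section depth
open CategoryTheory Abelian Limits

variable {R : Type u} [CommRing R] {k : ModuleCat.{u} R}
variable {M₁ M₂ M₃ : Type u} [AddCommGroup M₁] [Module R M₁] [AddCommGroup M₂] [Module R M₂]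
  [AddCommGroup M₃] [Module R M₃]

theorem shortExact_of (f : M₁ →ₗ[R] M₂) (g : M₂ →ₗ[R] M₃) (hf : Function.Injective f)
    (hg : Function.Surjective g) (hfg : Function.Exact f g) :
    (ModuleCat.shortComplexOfCompEqZero f g hfg.linearMap_comp_eq_zero).ShortExact where
  exact := ModuleCat.shortComplex_exact _ hfg
  mono_f := by simpa [ModuleCat.shortComplexOfCompEqZero, ModuleCat.mono_iff_injective] using! hf
  epi_g := by simpa [ModuleCat.shortComplexOfCompEqZero, ModuleCat.epi_iff_surjective] using! hg

theorem ExtDepth.ker {d : ℕ} (f : M₁ →ₗ[R] M₂) (g : M₂ →ₗ[R] M₃) (hf : Function.Injective f)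
    (hg : Function.Surjective g) (hfg : Function.Exact f g)
    (h2 : ExtDepth k M₂ (d + 1)) (h3 : ExtDepth k M₃ d) : ExtDepth k M₁ (d + 1) := by
  intro i hi
  have hS := shortExact_of f g hf hg hfg
  rcases i with _ | i
  · have : Subsingleton (Ext k (ModuleCat.shortComplexOfCompEqZero f g
      hfg.linearMap_comp_eq_zero).X₂ 0) := h2 0 hi
    have := hS.mono_f
    exact (Ext.postcomp_mk₀_injective_of_mono k (ModuleCat.shortComplexOfCompEqZero f g
      hfg.linearMap_comp_eq_zero).f).subsingleton
  · have z2 := AddCommGrpCat.isZero_of_iff_subsingleton.mpr (h2 (i + 1) hi)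
    have z3 := AddCommGrpCat.isZero_of_iff_subsingleton.mpr (h3 i (by omega))
    exact AddCommGrpCat.subsingleton_of_isZero <| ShortComplex.Exact.isZero_of_both_zeros
      (Ext.covariant_sequence_exact₁' k hS i (i + 1) rfl)
      (z3.eq_zero_of_src _) (z2.eq_zero_of_tgt _)

theorem ExtDepth.coker {d : ℕ} (f : M₁ →ₗ[R] M₂) (g : M₂ →ₗ[R] M₃) (hf : Function.Injective f)
    (hg : Function.Surjective g) (hfg : Function.Exact f g)
    (h1 : ExtDepth k M₁ (d + 1)) (h2 : ExtDepth k M₂ (d + 1)) : ExtDepth k M₃ d := by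
  intro i hi
  have hS := shortExact_of f g hf hg hfg
  have z2 := AddCommGrpCat.isZero_of_iff_subsingleton.mpr (h2 i (by omega))
  have z1 := AddCommGrpCat.isZero_of_iff_subsingleton.mpr (h1 (i + 1) (by omega))
  exact AddCommGrpCat.subsingleton_of_isZero <| ShortComplex.Exact.isZero_of_both_zeros
      (Ext.covariant_sequence_exact₃' k hS i (i + 1) rfl)
      (z2.eq_zero_of_src _) (z1.eq_zero_of_tgt _)

theorem ExtDepth.congr {d : ℕ} (e : M₁ ≃ₗ[R] M₂) (h : ExtDepth k M₁ d) : ExtDepth k M₂ d := by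
  intro i hi
  have := h i hi
  let f := e.toModuleIso
  refine ⟨fun x y => ?_⟩
  have key : ∀ x : Ext k (ModuleCat.of R M₂) i, x = 0 := by
    intro x
    have h0 : x.comp (Ext.mk₀ f.inv) (add_zero i) = 0 := Subsingleton.elim _ _
    have h1 : (x.comp (Ext.mk₀ f.inv) (add_zero i)).comp (Ext.mk₀ f.hom) (add_zero i) = x := by
      rw [Ext.comp_assoc_of_third_deg_zero, Ext.mk₀_comp_mk₀]
      simp
    rw [← h1, h0]; simp
  rw [key x, key y]

theorem ExtDepth.of_subsingleton {d : ℕ} [Subsingleton M₁] : ExtDepth k M₁ d := by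
  intro i hi
  refine ⟨fun x y => ?_⟩
  have key : ∀ x : Ext k (ModuleCat.of R M₁) i, x = 0 := by
    intro x
    have h0 : (𝟙 (ModuleCat.of R M₁)) = 0 := by
      ext x
      exact Subsingleton.elim (α := M₁) _ _
    have h1 : x.comp (Ext.mk₀ (𝟙 (ModuleCat.of R M₁))) (add_zero i) = x := by simp
    rw [← h1, h0]; simp
  rw [key x, key y]

/-- The liaison step for depth. -/
theorem ExtDepth.liaison {d : ℕ} (N C I : Ideal R) [hN : N.IsPrime] (hNC : N ≤ C) (hNI : N ≤ I)
    (f g : R) (hf : f ∉ N) (hg : g ∉ N)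
    (h1 : ∀ c ∈ C, ∃ i ∈ I, f * c - g * i ∈ N)
    (h2 : ∀ i ∈ I, ∃ c ∈ C, f * c - g * i ∈ N)
    (dN : ExtDepth k (R ⧸ N) (d + 1)) (dC : ExtDepth k (R ⧸ C) d) :
    ExtDepth k (R ⧸ I) d := by
  let C' : Submodule R (R ⧸ N) := Submodule.map N.mkQ C
  let I' : Submodule R (R ⧸ N) := Submodule.map N.mkQ I
  have inj : ∀ x : R, x ∉ N → Function.Injective (LinearMap.lsmul R (R ⧸ N) x) := by
    intro x hx
    rw [← LinearMap.ker_eq_bot, LinearMap.ker_eq_bot']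
    intro z hz
    obtain ⟨z, rfl⟩ := Submodule.mkQ_surjective N z
    simp only [LinearMap.lsmul_apply, ← map_smul] at hz
    simp only [Submodule.mkQ_apply, Submodule.Quotient.mk_eq_zero, smul_eq_mul] at hz ⊢
    exact (hN.mem_or_mem hz).resolve_left hx
  have e1 : Submodule.map (LinearMap.lsmul R (R ⧸ N) f) C' =
      Submodule.map (LinearMap.lsmul R (R ⧸ N) g) I' := by
    apply le_antisymm
    · rintro _ ⟨_, ⟨c, hc, rfl⟩, rfl⟩
      obtain ⟨i, hi, hci⟩ := h1 c hc
      refine ⟨_, ⟨i, hi, rfl⟩, ?_⟩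
      simp only [LinearMap.lsmul_apply, ← map_smul]
      exact ((Submodule.Quotient.eq N).2 hci).symm
    · rintro _ ⟨_, ⟨i, hi, rfl⟩, rfl⟩
      obtain ⟨c, hc, hci⟩ := h2 i hi
      refine ⟨_, ⟨c, hc, rfl⟩, ?_⟩
      simp only [LinearMap.lsmul_apply, ← map_smul]
      exact ((Submodule.Quotient.eq N).2 hci)
  have eCI : C' ≃ₗ[R] I' :=
    (Submodule.equivMapOfInjective _ (inj f hf) C').trans
      ((LinearEquiv.ofEq _ _ e1).trans (Submodule.equivMapOfInjective _ (inj g hg) I').symm)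
  have dC' : ExtDepth k ((R ⧸ N) ⧸ C') d :=
    dC.congr (Submodule.quotientQuotientEquivQuotient N C hNC).symm
  have d1 : ExtDepth k C' (d + 1) :=
    ExtDepth.ker C'.subtype C'.mkQ C'.injective_subtype C'.mkQ_surjective
      (LinearMap.exact_subtype_mkQ C') dN dC'
  have d2 : ExtDepth k I' (d + 1) := d1.congr eCI
  have d3 : ExtDepth k ((R ⧸ N) ⧸ I') d :=
    ExtDepth.coker I'.subtype I'.mkQ I'.injective_subtype I'.mkQ_surjective
      (LinearMap.exact_subtype_mkQ I') d2 dN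
  exact d3.congr (Submodule.quotientQuotientEquivQuotient N I hNI)

end depth
end LD


namespace LD
section base
open CategoryTheory Abelian Limits

variable {R : Type u} [CommRing R] {k : ModuleCat.{u} R}

theorem ExtDepth.reg_step {d : ℕ} (P : Ideal R) (x : R) (hk : x ∈ Module.annihilator R k)
    (hx : ∀ z, x * z ∈ P → z ∈ P) (h : ExtDepth k (R ⧸ (P ⊔ Ideal.span {x})) d) :
    ExtDepth k (R ⧸ P) (d + 1) := by
  have hle : P ≤ P ⊔ Ideal.span {x} := le_sup_left
  let g : (R ⧸ P) →ₗ[R] (R ⧸ (P ⊔ Ideal.span {x})) := Submodule.factor hle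
  have hg : Function.Surjective g := Submodule.factor_surjective hle
  have hf : Function.Injective (LinearMap.lsmul R (R ⧸ P) x) := by
    rw [← LinearMap.ker_eq_bot, LinearMap.ker_eq_bot']
    intro z hz
    obtain ⟨z, rfl⟩ := Submodule.mkQ_surjective P z
    simp only [LinearMap.lsmul_apply, ← map_smul] at hz
    simp only [Submodule.mkQ_apply, Submodule.Quotient.mk_eq_zero, smul_eq_mul] at hz ⊢
    exact hx _ hz
  have hfg : Function.Exact (LinearMap.lsmul R (R ⧸ P) x) g := by
    intro z
    obtain ⟨z, rfl⟩ := Submodule.mkQ_surjective P z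
    constructor
    · intro hz
      have hz' : z ∈ P ⊔ Ideal.span {x} := by
        have : g (P.mkQ z) = (P ⊔ Ideal.span {x}).mkQ z := rfl
        rw [this] at hz
        exact (Submodule.Quotient.mk_eq_zero _).1 hz
      obtain ⟨p, hp, q, hq, rfl⟩ := Submodule.mem_sup.1 hz'
      obtain ⟨w, rfl⟩ := Ideal.mem_span_singleton'.1 hq
      refine ⟨P.mkQ w, ?_⟩
      simp only [LinearMap.lsmul_apply, ← map_smul]
      refine (Submodule.Quotient.eq P).2 ?_
      simp only [smul_eq_mul]
      have : x * w - (p + w * x) = -p := by ring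
      rw [this]; exact P.neg_mem hp
    · rintro ⟨w, hw⟩
      rw [← hw]
      obtain ⟨w, rfl⟩ := Submodule.mkQ_surjective P w
      simp only [LinearMap.lsmul_apply, ← map_smul]
      have : g (P.mkQ (x • w)) = (P ⊔ Ideal.span {x}).mkQ (x • w) := rfl
      rw [this]
      simp only [Submodule.mkQ_apply, Submodule.Quotient.mk_eq_zero, smul_eq_mul]
      exact Ideal.mul_mem_right _ _ (Ideal.mem_sup_right (Ideal.mem_span_singleton_self x))
  have hS := shortExact_of _ g hf hg hfg
  intro i hi
  let S := ModuleCat.shortComplexOfCompEqZero (LinearMap.lsmul R (R ⧸ P) x) g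
    hfg.linearMap_comp_eq_zero
  have hz : AddCommGrpCat.ofHom ((Ext.mk₀ S.f).postcomp k (add_zero i)) = 0 :=
    Ext.postcomp_smul_id_eq_zero_of_mem_annihilator (M := ModuleCat.of R (R ⧸ P)) hk i
  have hm : Mono (AddCommGrpCat.ofHom ((Ext.mk₀ S.f).postcomp k (add_zero i))) := by
    rcases i with _ | i
    · have := hS.mono_f
      exact Ext.mono_postcomp_mk₀_of_mono k S.f
    · have z3 := AddCommGrpCat.isZero_of_iff_subsingleton.mpr (h i (by omega))
      exact (Ext.covariant_sequence_exact₁' k hS i (i + 1) rfl).mono_g (z3.eq_zero_of_src _)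
  exact AddCommGrpCat.subsingleton_of_isZero (IsZero.of_mono_eq_zero _ hz)

end base

section poly
variable {K : Type u} [Field K] {σ : Type} [Fintype σ]

/-- residue field at the origin -/
noncomputable abbrev resK (K : Type u) [Field K] (σ : Type) : ModuleCat.{u} (MvPolynomial σ K) :=
  ModuleCat.of (MvPolynomial σ K) (MvPolynomial σ K ⧸ idealOfVars σ K)

theorem extDepth_vars (S : Finset σ) (d : ℕ) (h : d + S.card = Fintype.card σ) :
    ExtDepth (resK K σ) (MvPolynomial σ K ⧸ Ideal.span (X '' (S : Set σ) : Set (MvPolynomial σ K))) d := by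
  classical
  induction d generalizing S with
  | zero => intro i hi; omega
  | succ d ih =>
    obtain ⟨v, hv⟩ : ∃ v, v ∉ S := by
      by_contra hcon
      push Not at hcon
      have : S = Finset.univ := Finset.eq_univ_iff_forall.2 hcon
      rw [this, Finset.card_univ] at h
      omega
    refine ExtDepth.reg_step _ (X v) ?_ ?_ ?_
    · have : Module.annihilator (MvPolynomial σ K) (MvPolynomial σ K ⧸ idealOfVars σ K) =
        idealOfVars σ K := Ideal.annihilator_quotient
      change X v ∈ Module.annihilator (MvPolynomial σ K) (MvPolynomial σ K ⧸ idealOfVars σ K)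
      rw [this]
      exact Ideal.subset_span ⟨v, rfl⟩
    · intro z hz
      rw [mem_ideal_span_X_image] at hz ⊢
      intro m hm
      obtain ⟨i, hi, hmi⟩ := hz (Finsupp.single v 1 + m) (by
        rw [support_X_mul]
        exact Finset.mem_map.2 ⟨m, hm, rfl⟩)
      refine ⟨i, hi, ?_⟩
      have : v ≠ i := by rintro rfl; exact hv hi
      simpa [Finsupp.single_apply, this] using hmi
    · have := ih (insert v S) (by rw [Finset.card_insert_of_notMem hv]; omega)
      rw [Finset.coe_insert, Set.image_insert_eq, Set.insert_eq, Ideal.span_union, sup_comm] at this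
      exact this

theorem extDepth_bot : ExtDepth (resK K σ) (MvPolynomial σ K ⧸ (⊥ : Ideal (MvPolynomial σ K)))
    (Fintype.card σ) := by
  have := extDepth_vars (K := K) (∅ : Finset σ) (Fintype.card σ) (by simp)
  rw [Finset.coe_empty, Set.image_empty, Ideal.span_empty] at this
  exact this

open Pointwise in
theorem length_le_dim {A : Type*} [CommRing A] (rs : List A) :
    RingTheory.Sequence.IsRegular A rs → (rs.length : WithBot ℕ∞) ≤ ringKrullDim A := by
  induction h : rs.length generalizing A rs with
  | zero =>
    intro h
    have := h.nontrivial
    simpa using ringKrullDim_nonneg_of_nontrivial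
  | succ n ih =>
    match rs, h with
    | r :: rs, h =>
      intro hr
      rw [RingTheory.Sequence.isRegular_cons_iff'] at hr
      have hlen : rs.length = n := by simpa using h
      let B := A ⧸ Ideal.span {r}
      have hB : RingTheory.Sequence.IsRegular B (rs.map (Ideal.Quotient.mk (Ideal.span {r}))) := by
        have e : QuotSMulTop r A ≃ₗ[B] B := by
          have h0 : (r • (⊤ : Submodule A A)) = Ideal.span {r} := by
            rw [← Submodule.ideal_span_singleton_smul, smul_eq_mul, Ideal.mul_top]
          exact (Submodule.quotEquivOfEq _ _ h0).extendScalarsOfSurjective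
            Ideal.Quotient.mk_surjective
        exact (e.isRegular_congr _).1 hr.2
      have := ih _ (by simpa using hlen) hB
      have hnz : r ∈ nonZeroDivisors A := by
        rw [mem_nonZeroDivisors_iff_right]
        intro z hz
        exact hr.1 (by simpa [mul_comm] using hz)
      have h2 := ringKrullDim_quotient_succ_le_of_nonZeroDivisor hnz
      refine le_trans ?_ h2
      push_cast
      gcongr

theorem cm_of_depth (I : Ideal (MvPolynomial σ K)) (hI : I ≤ idealOfVars σ K) (d : ℕ)
    (h : ExtDepth (resK K σ) (MvPolynomial σ K ⧸ I) d)
    (hd : ringKrullDim (MvPolynomial σ K ⧸ I) ≤ d) :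
    ∃ rs : List (MvPolynomial σ K ⧸ I),
    (∀ x ∈ rs, x ∈ (Ideal.span (Set.range (MvPolynomial.X : σ → MvPolynomial σ K))).map
      (Ideal.Quotient.mk I)) ∧
    RingTheory.Sequence.IsRegular (MvPolynomial σ K ⧸ I) rs ∧
    (rs.length : WithBot ℕ∞) = ringKrullDim (MvPolynomial σ K ⧸ I) := by
  let R := MvPolynomial σ K
  let m := idealOfVars σ K
  have htop : m ≠ ⊤ := by
    intro h
    have h1 : (1 : R) ∈ idealOfVars σ K := by
      change idealOfVars σ K = ⊤ at h
      rw [h]; trivial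
    have := (Ideal.span_le (I := RingHom.ker (constantCoeff (σ := σ) (R := K)))).2 (by
      rintro _ ⟨i, rfl⟩; simp) h1
    simp at this
  have hlt : m • (⊤ : Submodule R (R ⧸ I)) < ⊤ := by
    rw [lt_top_iff_ne_top]
    intro h
    apply htop
    rw [Ideal.smul_top_eq_map, Submodule.restrictScalars_eq_top_iff] at h
    have := Ideal.comap_map_of_surjective (Ideal.Quotient.mk I) Ideal.Quotient.mk_surjective m
    have h' : Ideal.map (Ideal.Quotient.mk I) m = ⊤ := h
    rw [h', Ideal.comap_top] at this
    rw [eq_top_iff, this]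
    refine sup_le le_rfl ?_
    intro x hx
    refine hI ?_
    simpa [Ideal.Quotient.eq_zero_iff_mem] using hx
  obtain ⟨rs, hlen, hmem, hreg⟩ := ModuleCat.exists_isRegular_of_exists_subsingleton_ext m d
    (ModuleCat.of R (R ⧸ I)) hlt (resK K σ) (by
      rw [Module.support_eq_zeroLocus]
      have ha : Module.annihilator (MvPolynomial σ K) (MvPolynomial σ K ⧸ idealOfVars σ K) =
        idealOfVars σ K := Ideal.annihilator_quotient
      exact congrArg (fun J : Ideal R => PrimeSpectrum.zeroLocus (J : Set R)) ha) h
  have hreg' : RingTheory.Sequence.IsRegular (R ⧸ I) (rs.map (algebraMap R (R ⧸ I))) := by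
    have hw := (RingTheory.Sequence.isWeaklyRegular_map_algebraMap_iff (M := R ⧸ I) (R ⧸ I) rs).2
      hreg.toIsWeaklyRegular
    refine ⟨hw, ?_⟩
    intro h
    apply hlt.ne
    have h3 : Ideal.ofList (rs.map (algebraMap R (R ⧸ I))) ≤ m.map (algebraMap R (R ⧸ I)) := by
      rw [← Ideal.map_ofList]
      apply Ideal.map_mono
      rw [Ideal.ofList, Ideal.span_le]
      intro x hx
      exact hmem x hx
    rw [Ideal.smul_top_eq_map, Submodule.restrictScalars_eq_top_iff, eq_top_iff]
    rw [smul_eq_mul, Ideal.mul_top] at h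
    rw [h]; exact h3
  refine ⟨rs.map (algebraMap R (R ⧸ I)), ?_, hreg', ?_⟩
  · intro x hx
    obtain ⟨r, hr, rfl⟩ := List.mem_map.1 hx
    exact Ideal.mem_map_of_mem _ (hmem r hr)
  · refine le_antisymm (length_le_dim _ hreg') ?_
    rw [List.length_map, hlen]; exact hd

theorem dim_bot : ringKrullDim (MvPolynomial σ K ⧸ (⊥ : Ideal (MvPolynomial σ K))) ≤
    (Fintype.card σ : WithBot ℕ∞) := by
  refine (ringKrullDim_quotient_le _).trans ?_
  simp [MvPolynomial.ringKrullDim_of_isNoetherianRing]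

theorem dim_lt {R : Type*} [CommRing R] (N I : Ideal R) [N.IsPrime] (h : N < I) :
    ringKrullDim (R ⧸ I) + 1 ≤ ringKrullDim (R ⧸ N) := by
  obtain ⟨x, hxI, hxN⟩ := SetLike.exists_of_lt h
  refine ringKrullDim_succ_le_of_surjective (Ideal.Quotient.factor h.le)
    (Ideal.Quotient.factor_surjective h.le) (r := Ideal.Quotient.mk N x) ?_ ?_
  · apply mem_nonZeroDivisors_of_ne_zero
    rwa [Ne, Ideal.Quotient.eq_zero_iff_mem]
  · simpa [Ideal.Quotient.eq_zero_iff_mem] using hxI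

end poly
end LD


namespace LD
section elim
variable {K : Type u} [Field K] {σ : Type} [DecidableEq σ]

/-- set the variable `v` to zero -/
noncomputable def rho (K : Type u) [Field K] (v : σ) : MvPolynomial σ K →ₐ[K] MvPolynomial σ K :=
  aeval (fun u => if u = v then 0 else X u)

theorem rho_X_self (v : σ) : rho K v (X v) = 0 := by simp [rho]

theorem rho_X_ne {u v : σ} (h : u ≠ v) : rho K v (X u) = X u := by simp [rho, h]

theorem rho_rho (v : σ) (f : MvPolynomial σ K) : rho K v (rho K v f) = rho K v f := by
  have : (rho K v).comp (rho K v) = rho K v := by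
    ext u
    by_cases h : u = v
    · subst h; simp [rho_X_self]
    · simp [rho_X_ne h]
  exact DFunLike.congr_fun this f

theorem exists_poly (v : σ) (f : MvPolynomial σ K) :
    ∃ p : Polynomial (MvPolynomial σ K), (∀ i, rho K v (p.coeff i) = p.coeff i) ∧
      p.eval (X v) = f := by
  induction f using MvPolynomial.induction_on with
  | C a =>
    refine ⟨Polynomial.C (C a), fun i => ?_, by simp⟩
    rw [Polynomial.coeff_C]
    split_ifs
    · simp [rho]
    · simp
  | add f g hf hg =>
    obtain ⟨p, hp, rfl⟩ := hf
    obtain ⟨q, hq, rfl⟩ := hg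
    exact ⟨p + q, fun i => by simp [hp, hq], by simp⟩
  | mul_X f u hf =>
    obtain ⟨p, hp, rfl⟩ := hf
    by_cases h : u = v
    · subst h
      refine ⟨p * Polynomial.X, fun i => ?_, by simp⟩
      rcases i with _ | i
      · simp
      · simp [hp]
    · exact ⟨p * Polynomial.C (X u), fun i => by simp [hp, rho_X_ne h], by simp⟩

theorem field_aux1 {F : Type*} [Field F] {a b c d : F} (hb : b ≠ 0) (h : a * c - b * d = 0) :
    -a / b * c + d = 0 := by
  field_simp
  linear_combination -h

theorem field_aux2 {F : Type*} [Field F] {b : F} (hb : b ≠ 0) (a c : F) (i j : ℕ) :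
    c * (-a) ^ i * b ^ j = b ^ (i + j) * (c * (-a / b) ^ i) := by
  rw [pow_add, div_pow]
  field_simp

set_option maxHeartbeats 4000000 in
theorem elim_step (v : σ) (k : ModuleCat.{u} (MvPolynomial σ K))
    (G : Set (MvPolynomial σ K)) (P : Set (MvPolynomial σ K × MvPolynomial σ K))
    (N C I : Ideal (MvPolynomial σ K)) (g0 h0 : MvPolynomial σ K)
    (hN : N = Ideal.span G) (hG : ∀ g ∈ G, rho K v g = g)
    (hP : ∀ x ∈ P, rho K v x.1 = x.1 ∧ rho K v x.2 = x.2)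
    (hP0 : (g0, h0) ∈ P)
    (hcross : ∀ x ∈ P, h0 * x.1 - g0 * x.2 ∈ N)
    (hC : C = N ⊔ Ideal.span (Prod.fst '' P))
    (hI : I = N ⊔ Ideal.span ((fun x => X v * x.1 + x.2) '' P))
    (pN : N.IsPrime) (pC : C.IsPrime) (hh0 : h0 ∉ C) (hg0 : g0 ∉ N) :
    I.IsPrime ∧ N < I ∧ ∀ d, ExtDepth k (MvPolynomial σ K ⧸ N) (d + 1) →
      ExtDepth k (MvPolynomial σ K ⧸ C) d → ExtDepth k (MvPolynomial σ K ⧸ I) d := by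
  have hNC : N ≤ C := hC ▸ le_sup_left
  have hNI : N ≤ I := hI ▸ le_sup_left
  have hPC : ∀ x ∈ P, x.1 ∈ C := fun x hx =>
    hC ▸ Ideal.mem_sup_right (Ideal.subset_span ⟨x, hx, rfl⟩)
  have hPI : ∀ x ∈ P, X v * x.1 + x.2 ∈ I := fun x hx =>
    hI ▸ Ideal.mem_sup_right (Ideal.subset_span ⟨x, hx, rfl⟩)
  have hf0 : X v * g0 + h0 ∉ N := by
    intro h
    apply hh0
    have h2 : X v * g0 ∈ C := C.mul_mem_left _ (hPC _ hP0)
    exact (C.add_mem_iff_right h2).1 (hNC h)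
  have hlt : N < I := lt_of_le_of_ne hNI (by
    intro h
    have h3 := hPI _ hP0
    rw [← h] at h3
    exact hf0 h3)
  have ind : ∀ (J : Ideal (MvPolynomial σ K)) (S : Set (MvPolynomial σ K))
      (Q : MvPolynomial σ K → Prop), J = N ⊔ Ideal.span S → Q 0 → (∀ x y, Q x → Q y → Q (x + y)) →
      (∀ a x, Q x → Q (a * x)) → (∀ x ∈ G, Q x) → (∀ x ∈ S, Q x) → ∀ x ∈ J, Q x := by
    intro J S Q hJ h0 hadd hmul hQG hQS x hx
    rw [hJ, hN, ← Ideal.span_union] at hx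
    refine Submodule.span_induction (p := fun x _ => Q x) ?_ h0 (fun x y _ _ => hadd x y)
      (fun a x _ => hmul a x) hx
    rintro x (hx | hx)
    · exact hQG x hx
    · exact hQS x hx
  have hGN : ∀ g ∈ G, g ∈ N := fun g hg => hN ▸ Ideal.subset_span hg
  refine ⟨?_, hlt, ?_⟩
  · let F := FractionRing (MvPolynomial σ K ⧸ N)
    let ι : MvPolynomial σ K →+* F := (algebraMap (MvPolynomial σ K ⧸ N) F).comp
      (Ideal.Quotient.mk N)
    have hι : ∀ x, ι x = 0 ↔ x ∈ N := by
      intro x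
      rw [RingHom.comp_apply, FaithfulSMul.algebraMap_eq_zero_iff, Ideal.Quotient.eq_zero_iff_mem]
    let y : F := - ι h0 / ι g0
    let ev : MvPolynomial σ K →+* F := eval₂Hom (ι.comp MvPolynomial.C)
      (fun u => if u = v then y else ι (X u))
    have evX : ev (X v) = y := by simp [ev]
    have hg0' : ι g0 ≠ 0 := fun h => hg0 ((hι _).1 h)
    have evρ : ∀ s, rho K v s = s → ev s = ι s := by
      intro s hs
      rw [← hs]
      have : ev.comp (rho K v : MvPolynomial σ K →+* MvPolynomial σ K) =
          ι.comp (rho K v : MvPolynomial σ K →+* MvPolynomial σ K) := by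
        apply MvPolynomial.ringHom_ext
        · intro a
          simp [rho, ev]
        · intro u
          by_cases h : u = v
          · subst h; simp [rho_X_self]
          · simp [rho_X_ne h, ev, h]
      exact DFunLike.congr_fun this s
    have hIker : ∀ x ∈ I, ev x = 0 := by
      refine ind I _ (fun x => ev x = 0) hI (by simp) (fun x y hx hy => by simp [hx, hy])
        (fun a x hx => by simp [hx]) ?_ ?_
      · intro x hx
        rw [evρ x (hG x hx), hι]
        exact hGN x hx
      · rintro _ ⟨x, hx, rfl⟩
        have h1 := (hι _).2 (hcross x hx)
        simp only [map_sub, map_mul] at h1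
        simp only [map_add, map_mul, evX, evρ _ (hP x hx).1, evρ _ (hP x hx).2, y]
        exact field_aux1 hg0' h1
    have hCd : ∀ c ∈ C, ∃ d, rho K v d = d ∧ d + X v * rho K v c ∈ I := by
      refine ind C _ (fun c => ∃ d, rho K v d = d ∧ d + X v * rho K v c ∈ I) hC ⟨0, by simp⟩ ?_ ?_
        ?_ ?_
      · rintro x y ⟨d, h1, h2⟩ ⟨d', h1', h2'⟩
        refine ⟨d + d', by simp [h1, h1'], ?_⟩
        have := I.add_mem h2 h2'
        rw [map_add]
        convert this using 1
        ring
      · rintro a x ⟨d, h1, h2⟩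
        refine ⟨rho K v a * d, by simp [h1, rho_rho], ?_⟩
        have := I.mul_mem_left (rho K v a) h2
        rw [map_mul]
        convert this using 1
        ring
      · intro x hx
        refine ⟨0, by simp, ?_⟩
        rw [hG x hx, zero_add]
        exact I.mul_mem_left _ (hNI (hGN x hx))
      · rintro _ ⟨x, hx, rfl⟩
        refine ⟨x.2, (hP x hx).2, ?_⟩
        rw [(hP x hx).1, add_comm]
        exact hPI x hx
    have main : ∀ n, ∀ p : Polynomial (MvPolynomial σ K), p.natDegree ≤ n →
        (∀ i, rho K v (p.coeff i) = p.coeff i) → ev (p.eval (X v)) = 0 → p.eval (X v) ∈ I := by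
      intro n
      induction n with
      | zero =>
        intro p hp hc hev
        rw [Polynomial.eq_C_of_natDegree_le_zero hp, Polynomial.eval_C] at hev ⊢
        rw [evρ _ (hc 0), hι] at hev
        exact hNI hev
      | succ n ih =>
        intro p hp hc hev
        have hcC : p.coeff (n + 1) ∈ C := by
          have e1 : ev (p.eval (X v)) = ∑ i ∈ Finset.range (n + 2), ι (p.coeff i) * y ^ i := by
            rw [Polynomial.eval_eq_sum_range' (Nat.lt_succ_of_le hp)]
            simp only [map_sum, map_mul, map_pow, evX]
            exact Finset.sum_congr rfl (fun i _ => by rw [evρ _ (hc i)])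
          have e2 : ι (∑ i ∈ Finset.range (n + 2), p.coeff i * (-h0) ^ i * g0 ^ (n + 1 - i)) = 0 := by
            have : ι g0 ^ (n + 1) * ev (p.eval (X v)) = 0 := by rw [hev, mul_zero]
            rw [← this, e1, Finset.mul_sum, map_sum]
            refine Finset.sum_congr rfl (fun i hi => ?_)
            have hi' : i ≤ n + 1 := by have := Finset.mem_range.1 hi; omega
            simp only [map_mul, map_pow, map_neg, y]
            obtain ⟨j, hj⟩ := Nat.exists_eq_add_of_le hi'
            rw [hj, Nat.add_sub_cancel_left]
            exact field_aux2 hg0' _ _ _ _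
          rw [hι, Finset.sum_range_succ] at e2
          have e3 : ∑ i ∈ Finset.range (n + 1), p.coeff i * (-h0) ^ i * g0 ^ (n + 1 - i) ∈ C := by
            refine C.sum_mem (fun i hi => C.mul_mem_left _ ?_)
            have := Finset.mem_range.1 hi
            exact C.pow_mem_of_mem (hPC _ hP0) _ (by omega)
          have e4 := (C.add_mem_iff_right e3).1 (hNC e2)
          rw [Nat.sub_self, pow_zero, mul_one] at e4
          rcases pC.mem_or_mem e4 with h | h
          · exact h
          · exact absurd (C.neg_mem_iff.1 (pC.mem_of_pow_mem _ h)) hh0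
        obtain ⟨d, hd, hdI⟩ := hCd _ hcC
        rw [hc] at hdI
        have hmem : X v ^ n * (d + X v * p.coeff (n + 1)) ∈ I := I.mul_mem_left _ hdI
        set q := p - Polynomial.monomial (n + 1) (p.coeff (n + 1)) - Polynomial.monomial n d with hq
        have hqe : p.eval (X v) = q.eval (X v) + X v ^ n * (d + X v * p.coeff (n + 1)) := by
          simp only [hq, Polynomial.eval_sub, Polynomial.eval_monomial]
          ring
        rw [hqe]
        refine I.add_mem (ih q ?_ ?_ ?_) hmem
        · rw [Polynomial.natDegree_le_iff_coeff_eq_zero]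
          intro j hj
          simp only [hq, Polynomial.coeff_sub, Polynomial.coeff_monomial]
          rw [if_neg (by omega : ¬ n = j), sub_zero]
          by_cases hj' : n + 1 = j
          · subst hj'; simp
          · rw [if_neg hj', sub_zero]
            exact Polynomial.coeff_eq_zero_of_natDegree_lt (by omega)
        · intro j
          simp only [hq, Polynomial.coeff_sub, Polynomial.coeff_monomial, map_sub, hc]
          split_ifs <;> simp [hd, hc]
        · have := hIker _ hmem
          rw [hqe, map_add, this, add_zero] at hev
          exact hev
    have hker : I = RingHom.ker ev := by
      apply le_antisymm
      · intro x hx; exact hIker x hx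
      · intro x hx
        obtain ⟨p, hp, rfl⟩ := exists_poly v x
        exact main p.natDegree p le_rfl hp hx
    rw [hker]
    exact RingHom.ker_isPrime ev
  · intro d dN dC
    refine ExtDepth.liaison N C I hNC hNI (X v * g0 + h0) g0 hf0 hg0 ?_ ?_ dN dC
    · refine ind C _ (fun c => ∃ i ∈ I, (X v * g0 + h0) * c - g0 * i ∈ N) hC ⟨0, I.zero_mem, by simp⟩
        ?_ ?_ ?_ ?_
      · rintro x y ⟨i, hi, h⟩ ⟨i', hi', h'⟩
        refine ⟨i + i', I.add_mem hi hi', ?_⟩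
        convert N.add_mem h h' using 1; ring
      · rintro a x ⟨i, hi, h⟩
        refine ⟨a * i, I.mul_mem_left _ hi, ?_⟩
        convert N.mul_mem_left a h using 1; ring
      · intro x hx
        exact ⟨0, I.zero_mem, by rw [mul_zero, sub_zero]; exact N.mul_mem_left _ (hGN x hx)⟩
      · rintro _ ⟨x, hx, rfl⟩
        refine ⟨_, hPI x hx, ?_⟩
        convert hcross x hx using 1; ring
    · refine ind I _ (fun i => ∃ c ∈ C, (X v * g0 + h0) * c - g0 * i ∈ N) hI ⟨0, C.zero_mem, by simp⟩
        ?_ ?_ ?_ ?_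
      · rintro x y ⟨i, hi, h⟩ ⟨i', hi', h'⟩
        refine ⟨i + i', C.add_mem hi hi', ?_⟩
        convert N.add_mem h h' using 1; ring
      · rintro a x ⟨i, hi, h⟩
        refine ⟨a * i, C.mul_mem_left _ hi, ?_⟩
        convert N.mul_mem_left a h using 1; ring
      · intro x hx
        refine ⟨0, C.zero_mem, ?_⟩
        rw [mul_zero, zero_sub]
        exact N.neg_mem (N.mul_mem_left _ (hGN x hx))
      · rintro _ ⟨x, hx, rfl⟩
        refine ⟨_, hPC x hx, ?_⟩
        convert hcross x hx using 1; ring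

/-- the degenerate case of the elimination step: adding a free variable -/
theorem elim_step_zero (v : σ) (k : ModuleCat.{u} (MvPolynomial σ K))
    (G : Set (MvPolynomial σ K)) (N I : Ideal (MvPolynomial σ K))
    (hN : N = Ideal.span G) (hG : ∀ g ∈ G, rho K v g = g)
    (hI : I = N ⊔ Ideal.span {X v}) (pN : N.IsPrime) :
    I.IsPrime ∧ N < I ∧ ∀ d, ExtDepth k (MvPolynomial σ K ⧸ N) (d + 1) →
      ExtDepth k (MvPolynomial σ K ⧸ I) d := by
  have hNI : N ≤ I := hI ▸ le_sup_left
  have hX : X v ∈ I := hI ▸ Ideal.mem_sup_right (Ideal.mem_span_singleton_self _)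
  have hρN : N ≤ N.comap (rho K v) := by
    conv_lhs => rw [hN]
    rw [Ideal.span_le]
    intro g hg
    change rho K v g ∈ N
    rw [hG g hg, hN]
    exact Ideal.subset_span hg
  have hsub : ∀ f, f - rho K v f ∈ Ideal.span {(X v : MvPolynomial σ K)} := by
    intro f
    obtain ⟨p, hp, rfl⟩ := exists_poly v f
    rw [Ideal.mem_span_singleton]
    have h1 : rho K v (p.eval (X v)) = p.coeff 0 := by
      rw [Polynomial.eval_eq_sum_range, map_sum, Finset.sum_range_succ']
      simp [rho_X_self, hp]
    rw [h1]
    have := Polynomial.sub_dvd_eval_sub (X v) 0 p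
    rwa [sub_zero, ← Polynomial.coeff_zero_eq_eval_zero] at this
  have hIc : I = N.comap (rho K v) := by
    apply le_antisymm
    · rw [hI]
      refine sup_le hρN ?_
      rw [Ideal.span_le, Set.singleton_subset_iff]
      change rho K v (X v) ∈ N
      rw [rho_X_self]; exact N.zero_mem
    · intro f hf
      have h1 : rho K v f ∈ N := hf
      rw [← sub_add_cancel f (rho K v f)]
      exact I.add_mem (hI ▸ Ideal.mem_sup_right (hsub f)) (hNI h1)
  have hXN : X v ∉ N := by
    intro h
    apply pN.ne_top
    rw [Ideal.eq_top_iff_one]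
    -- shift the variable
    let φ : MvPolynomial σ K →ₐ[K] MvPolynomial σ K := aeval (fun u => if u = v then 1 else X u)
    have hφ : ∀ s, rho K v s = s → φ s = s := by
      intro s hs
      have : φ.comp (rho K v) = rho K v := by
        ext u
        by_cases h : u = v
        · subst h; simp [rho_X_self]
        · simp [rho_X_ne h, φ, h]
      have := DFunLike.congr_fun this s
      rwa [AlgHom.comp_apply, hs] at this
    have hφN : N ≤ N.comap φ := by
      conv_lhs => rw [hN]
      rw [Ideal.span_le]
      intro g hg
      change φ g ∈ N
      rw [hφ g (hG g hg), hN]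
      exact Ideal.subset_span hg
    have := hφN h
    change φ (X v) ∈ N at this
    simpa [φ] using this
  refine ⟨?_, lt_of_le_of_ne hNI (fun h => hXN (h ▸ hX)), ?_⟩
  · rw [hIc]
    exact Ideal.IsPrime.comap _
  · intro d dN
    have : Subsingleton (MvPolynomial σ K ⧸ (⊤ : Ideal (MvPolynomial σ K))) :=
      Ideal.Quotient.subsingleton_iff.2 rfl
    refine ExtDepth.liaison N ⊤ I le_top hNI (X v) 1 hXN
      (fun h => pN.ne_top ((Ideal.eq_top_iff_one _).2 h)) ?_ ?_ dN ExtDepth.of_subsingleton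
    · intro c _
      exact ⟨X v * c, I.mul_mem_right _ hX, by simp⟩
    · intro i hi
      rw [hI] at hi
      obtain ⟨n, hn, z, hz, rfl⟩ := Submodule.mem_sup.1 hi
      obtain ⟨w, rfl⟩ := Ideal.mem_span_singleton'.1 hz
      refine ⟨w, trivial, ?_⟩
      have : X v * w - 1 * (n + w * X v) = -n := by ring
      rw [this]; exact N.neg_mem hn

end elim
end LD


namespace LD
section minors
variable {R : Type*} [CommRing R]

/-- the minor of `A` with row indices `r` and column indices `c` -/
def mnr (A : ℕ → ℕ → R) {n : ℕ} (r c : Fin n → ℕ) : R :=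
  (Matrix.of fun i j => A (r i) (c j)).det

theorem map_mnr {S : Type*} [CommRing S] (f : R →+* S) (A : ℕ → ℕ → R) {n : ℕ} (r c : Fin n → ℕ) :
    f (mnr A r c) = mnr (fun x y => f (A x y)) r c := by
  rw [mnr, RingHom.map_det]; rfl

theorem mnr_transpose (A : ℕ → ℕ → R) {n : ℕ} (r c : Fin n → ℕ) :
    mnr (fun x y => A y x) c r = mnr A r c := by
  rw [mnr, mnr, ← Matrix.det_transpose]; rfl

theorem mnr_congr (A A' : ℕ → ℕ → R) {n : ℕ} (r c : Fin n → ℕ)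
    (h : ∀ i j, A (r i) (c j) = A' (r i) (c j)) : mnr A r c = mnr A' r c := by
  rw [mnr, mnr]; congr 1; ext i j; exact h i j

theorem mnr_row_not_inj (A : ℕ → ℕ → R) {n : ℕ} (r c : Fin n → ℕ)
    (h : ¬ Function.Injective r) : mnr A r c = 0 := by
  rw [Function.Injective] at h
  push Not at h
  obtain ⟨i, j, hij, hne⟩ := h
  exact Matrix.det_zero_of_row_eq hne (by ext x; simp [hij])

theorem mnr_col_not_inj (A : ℕ → ℕ → R) {n : ℕ} (r c : Fin n → ℕ)
    (h : ¬ Function.Injective c) : mnr A r c = 0 := by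
  rw [← mnr_transpose]; exact mnr_row_not_inj _ _ _ h

theorem mnr_row_supp (Z : ℕ → ℕ → R) {k : ℕ} (r c : Fin (k + 1) → ℕ) (lo hi : ℕ)
    (hk : hi ≤ lo + k) (hZ : ∀ i j, (r i < lo ∨ hi ≤ r i) → Z (r i) (c j) = 0) :
    mnr Z r c = 0 := by
  by_cases hr : Function.Injective r
  · have : ∃ i, r i < lo ∨ hi ≤ r i := by
      by_contra hcon
      push Not at hcon
      have h1 : (Finset.univ.image r) ⊆ Finset.Ico lo hi := by
        intro x hx
        obtain ⟨i, _, rfl⟩ := Finset.mem_image.1 hx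
        exact Finset.mem_Ico.2 (hcon i)
      have h2 := Finset.card_le_card h1
      rw [Finset.card_image_of_injective _ hr] at h2
      simp at h2
      omega
    obtain ⟨i, hi⟩ := this
    exact Matrix.det_eq_zero_of_row_eq_zero i (fun j => hZ i j hi)
  · exact mnr_row_not_inj _ _ _ hr

theorem mnr_col_supp (Z : ℕ → ℕ → R) {k : ℕ} (r c : Fin (k + 1) → ℕ) (lo hi : ℕ)
    (hk : hi ≤ lo + k) (hZ : ∀ i j, (c j < lo ∨ hi ≤ c j) → Z (r i) (c j) = 0) :
    mnr Z r c = 0 := by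
  rw [← mnr_transpose]
  exact mnr_row_supp _ _ _ lo hi hk (fun i j h => hZ j i h)

theorem mnr_expand_row (A : ℕ → ℕ → R) {k : ℕ} (r c : Fin (k + 1) → ℕ) (i : Fin (k + 1)) :
    mnr A r c = ∑ j : Fin (k + 1), A (r i) (c j) * ((-1) ^ (i + j : ℕ) *
      mnr A (r ∘ i.succAbove) (c ∘ j.succAbove)) := by
  rw [mnr, Matrix.det_succ_row _ i]
  refine Finset.sum_congr rfl (fun j _ => ?_)
  rw [mnr]
  simp only [Matrix.of_apply]
  rw [mul_comm ((-1) ^ (i + j : ℕ)) (A (r i) (c j)), mul_assoc]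
  rfl

theorem mnr_update (A A' : ℕ → ℕ → R) {k : ℕ} (r c : Fin (k + 1) → ℕ) (x0 y0 : ℕ)
    (i0 j0 : Fin (k + 1)) (hi0 : r i0 = x0) (hj0 : c j0 = y0)
    (hr : ∀ i, i ≠ i0 → r i ≠ x0) (hc : ∀ j, j ≠ j0 → c j ≠ y0)
    (hA : ∀ i j, ¬ (r i = x0 ∧ c j = y0) → A (r i) (c j) = A' (r i) (c j)) :
    mnr A r c = mnr A' r c + (A x0 y0 - A' x0 y0) *
      ((-1) ^ (i0 + j0 : ℕ) * mnr A (r ∘ i0.succAbove) (c ∘ j0.succAbove)) := by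
  have hm : ∀ j, mnr A (r ∘ i0.succAbove) (c ∘ Fin.succAbove j) =
      mnr A' (r ∘ i0.succAbove) (c ∘ Fin.succAbove j) := by
    intro j
    refine mnr_congr _ _ _ _ (fun i j' => hA _ _ (fun h => ?_))
    exact hr _ (Fin.succAbove_ne i0 i) h.1
  rw [mnr_expand_row A r c i0, mnr_expand_row A' r c i0, ← sub_eq_iff_eq_add',
    ← Finset.sum_sub_distrib, Finset.sum_eq_single j0]
  · rw [hm, hi0, hj0]; ring
  · intro j _ hj
    rw [hm, hA _ _ (fun h => hc j hj h.2), sub_self]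
  · simp

/-- one-step Laplace expansion in the rows -/
theorem laplace_row_step (I : Ideal R) (A : ℕ → ℕ → R) (k α β : ℕ)
    (h : ∀ r c : Fin (k + 1) → ℕ, (∀ i, r i < α) → (∀ j, c j < β) → mnr A r c ∈ I)
    (r c : Fin (k + 2) → ℕ) (hr : ∀ i, r i < α + 1) (hc : ∀ j, c j < β) : mnr A r c ∈ I := by
  by_cases hinj : Function.Injective r
  · have : ∃ i0, ∀ i, i ≠ i0 → r i < α := by
      by_cases h0 : ∃ i0, r i0 = α
      · obtain ⟨i0, h0⟩ := h0
        refine ⟨i0, fun i hi => ?_⟩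
        have h1 : r i ≠ r i0 := fun h => hi (hinj h)
        have := hr i
        omega
      · push Not at h0
        refine ⟨0, fun i _ => ?_⟩
        have := h0 i
        have := hr i
        omega
    obtain ⟨i0, h0⟩ := this
    rw [mnr_expand_row A r c i0]
    refine I.sum_mem (fun j _ => I.mul_mem_left _ (I.mul_mem_left _ (h _ _ ?_ ?_)))
    · intro i; exact h0 _ (Fin.succAbove_ne i0 i)
    · intro j; exact hc _
  · rw [mnr_row_not_inj _ _ _ hinj]; exact I.zero_mem

theorem laplace_row (I : Ideal R) (A : ℕ → ℕ → R) (k α β : ℕ)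
    (h : ∀ r c : Fin (k + 1) → ℕ, (∀ i, r i < α) → (∀ j, c j < β) → mnr A r c ∈ I) (d : ℕ)
    (r c : Fin (k + d + 1) → ℕ) (hr : ∀ i, r i < α + d) (hc : ∀ j, c j < β) : mnr A r c ∈ I := by
  induction d with
  | zero => exact h r c hr hc
  | succ d ih => exact laplace_row_step I A (k + d) (α + d) β ih r c hr hc

theorem laplace_col (I : Ideal R) (A : ℕ → ℕ → R) (k α β : ℕ)
    (h : ∀ r c : Fin (k + 1) → ℕ, (∀ i, r i < α) → (∀ j, c j < β) → mnr A r c ∈ I) (d : ℕ)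
    (r c : Fin (k + d + 1) → ℕ) (hr : ∀ i, r i < α) (hc : ∀ j, c j < β + d) : mnr A r c ∈ I := by
  rw [← mnr_transpose]
  refine laplace_row I _ k β α (fun r c hr hc => ?_) d c r hc hr
  rw [mnr_transpose (fun x y => A x y)]
  exact h c r hc hr

end minors

section field
variable {F : Type*} [Field F]

theorem det_prod_zero {k : ℕ} (U : Matrix (Fin (k + 1)) (Fin k) F)
    (V : Matrix (Fin k) (Fin (k + 1)) F) : (U * V).det = 0 := by
  by_contra h
  have h1 : (U * V).rank = k + 1 := by
    rw [Matrix.rank_of_isUnit _ ((Matrix.isUnit_iff_isUnit_det _).2 (isUnit_iff_ne_zero.2 h))]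
    simp
  have h2 := Matrix.rank_mul_le_left U V
  have h3 := U.rank_le_width
  omega

theorem dl (A : ℕ → ℕ → F) (k α β : ℕ) (r0 c0 : Fin (k + 1) → ℕ)
    (hD : mnr A (fun i : Fin k => r0 i.castSucc) (fun i : Fin k => c0 i.castSucc) ≠ 0)
    (hb : ∀ x < α, ∀ y < β, mnr A (Fin.snoc (fun i : Fin k => r0 i.castSucc) x : Fin (k + 1) → ℕ)
      (Fin.snoc (fun i : Fin k => c0 i.castSucc) y : Fin (k + 1) → ℕ) = 0)
    (r c : Fin (k + 1) → ℕ) (hr : ∀ i, r i < α) (hc : ∀ j, c j < β) : mnr A r c = 0 := by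
  let r1 : Fin k → ℕ := fun i => r0 i.castSucc
  let c1 : Fin k → ℕ := fun i => c0 i.castSucc
  let D : Matrix (Fin k) (Fin k) F := Matrix.of fun i j => A (r1 i) (c1 j)
  have hDu : IsUnit D.det := isUnit_iff_ne_zero.2 hD
  letI : Invertible D := D.invertibleOfIsUnitDet hDu
  have key : ∀ x < α, ∀ y < β, A x y = ∑ j, (∑ i, A x (c1 i) * (⅟D) i j) * A (r1 j) y := by
    intro x hx y hy
    have h1 : (Matrix.fromBlocks D (Matrix.of fun (i : Fin k) (_ : Fin 1) => A (r1 i) y)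
      (Matrix.of fun (_ : Fin 1) (j : Fin k) => A x (c1 j))
      (Matrix.of fun (_ _ : Fin 1) => A x y)).det = 0 := by
      rw [← hb x hx y hy, mnr, ← Matrix.det_submatrix_equiv_self finSumFinEquiv]
      congr 1
      ext i j
      rcases i with i | i <;> rcases j with j | j
      · have e1 : Fin.castAdd 1 i = i.castSucc := rfl
        have e2 : Fin.castAdd 1 j = j.castSucc := rfl
        simp [e1, e2, D, r1, c1]
      · have e1 : Fin.castAdd 1 i = i.castSucc := rfl
        have e2 : Fin.natAdd k j = Fin.last k := by ext; simp
        simp [e1, e2, D, r1]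
      · have e1 : Fin.natAdd k i = Fin.last k := by ext; simp
        have e2 : Fin.castAdd 1 j = j.castSucc := rfl
        simp [e1, e2, D, c1]
      · have e1 : Fin.natAdd k i = Fin.last k := by ext; simp
        have e2 : Fin.natAdd k j = Fin.last k := by ext; simp
        simp [e1, e2]
    rw [Matrix.det_fromBlocks₁₁] at h1
    have h2 := (mul_eq_zero.1 h1).resolve_left hD
    rw [Matrix.det_fin_one] at h2
    simp only [Matrix.sub_apply, Matrix.of_apply, Matrix.mul_apply] at h2
    exact sub_eq_zero.1 h2
  have : (Matrix.of fun i j => A (r i) (c j)) =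
      (Matrix.of fun (i : Fin (k + 1)) (j : Fin k) => ∑ l, A (r i) (c1 l) * (⅟D) l j) *
      (Matrix.of fun (i : Fin k) (j : Fin (k + 1)) => A (r1 i) (c j)) := by
    ext i j
    rw [Matrix.mul_apply]
    exact key _ (hr i) _ (hc j)
  rw [mnr, this]
  exact det_prod_zero _ _
end field
end LD


namespace LD

/-- the minors prescribed by the condition `c = (p, q, k)` -/
def Mset {R : Type*} [CommRing R] (A : ℕ → ℕ → R) (c : ℕ × ℕ × ℕ) : Set R :=
  {f | ∃ r s : Fin (c.2.2 + 1) → ℕ, (∀ i, r i < c.1 + c.2.2) ∧ (∀ j, s j < c.2.1 + c.2.2) ∧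
    f = mnr A r s}

/-- the ideal generated by the minors prescribed by the conditions in `T` -/
def JJ {R : Type*} [CommRing R] (A : ℕ → ℕ → R) (T : Finset (ℕ × ℕ × ℕ)) : Ideal R :=
  Ideal.span (⋃ c ∈ T, Mset A c)

section basic
variable {R : Type*} [CommRing R] (A : ℕ → ℕ → R)

theorem mem_JJ {T : Finset (ℕ × ℕ × ℕ)} {p q k : ℕ} (hc : (p, q, k) ∈ T) (r s : Fin (k + 1) → ℕ)
    (hr : ∀ i, r i < p + k) (hs : ∀ j, s j < q + k) : mnr A r s ∈ JJ A T :=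
  Ideal.subset_span (Set.mem_biUnion (s := {x | x ∈ T}) hc ⟨r, s, hr, hs, rfl⟩)

theorem JJ_le {T : Finset (ℕ × ℕ × ℕ)} (I : Ideal R)
    (h : ∀ p q k, (p, q, k) ∈ T → ∀ r s : Fin (k + 1) → ℕ, (∀ i, r i < p + k) →
      (∀ j, s j < q + k) → mnr A r s ∈ I) : JJ A T ≤ I := by
  rw [JJ, Ideal.span_le]
  intro f hf
  simp only [Set.mem_iUnion] at hf
  obtain ⟨⟨p, q, k⟩, hc, r, s, hr, hs, rfl⟩ := hf
  exact h p q k hc r s hr hs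

theorem JJ_mono {T T' : Finset (ℕ × ℕ × ℕ)} (h : T ⊆ T') : JJ A T ≤ JJ A T' :=
  JJ_le A _ (fun _ _ _ hc r s hr hs => mem_JJ A (h hc) r s hr hs)

end basic

section step
variable {K : Type u} [Field K] {σ : Type} [DecidableEq σ]

/-- the generic matrix -/
noncomputable def gm (K : Type u) [Field K] (e : ℕ → ℕ → σ) : ℕ → ℕ → MvPolynomial σ K :=
  fun x y => X (e x y)

variable (e : ℕ → ℕ → σ) (ex ey : σ → ℕ) (m n : ℕ)

theorem eval_JJ (he : ∀ x < m, ∀ y < n, ex (e x y) = x ∧ ey (e x y) = y) (Z : ℕ → ℕ → K)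
    {k : ℕ} (r s : Fin k → ℕ) (hr : ∀ i, r i < m) (hs : ∀ j, s j < n) :
    eval (fun u => Z (ex u) (ey u)) (mnr (gm K e) r s) = mnr Z r s := by
  rw [map_mnr]
  refine mnr_congr _ _ _ _ (fun i j => ?_)
  have := he _ (hr i) _ (hs j)
  simp [gm, this.1, this.2]

theorem eval_zero (he : ∀ x < m, ∀ y < n, ex (e x y) = x ∧ ey (e x y) = y) (Z : ℕ → ℕ → K)
    (T : Finset (ℕ × ℕ × ℕ)) (hT : ∀ c ∈ T, c.1 + c.2.2 ≤ m ∧ c.2.1 + c.2.2 ≤ n)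
    (hZ : ∀ p q k, (p, q, k) ∈ T → ∀ r s : Fin (k + 1) → ℕ, (∀ i, r i < p + k) →
      (∀ j, s j < q + k) → mnr Z r s = 0) (f : MvPolynomial σ K) (hf : f ∈ JJ (gm K e) T) :
    eval (fun u => Z (ex u) (ey u)) f = 0 := by
  have : JJ (gm K e) T ≤ RingHom.ker (eval (fun u => Z (ex u) (ey u))) := by
    refine JJ_le _ _ (fun p q k hc r s hr hs => ?_)
    have h1 := hT _ hc
    rw [RingHom.mem_ker, eval_JJ e ex ey m n he Z r s (fun i => (hr i).trans_le h1.1)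
      (fun i => (hs i).trans_le h1.2)]
    exact hZ p q k hc r s hr hs
  exact this hf

theorem rho_mnr (he : ∀ x < m, ∀ y < n, ex (e x y) = x ∧ ey (e x y) = y) {x0 y0 : ℕ}
    (hx0 : x0 < m) (hy0 : y0 < n) {k : ℕ} (r s : Fin k → ℕ) (hr : ∀ i, r i < m) (hs : ∀ j, s j < n)
    (h : ∀ i j, ¬ (r i = x0 ∧ s j = y0)) :
    rho K (e x0 y0) (mnr (gm K e) r s) = mnr (gm K e) r s := by
  have h0 := map_mnr (rho K (e x0 y0) : MvPolynomial σ K →+* MvPolynomial σ K) (gm K e) r s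
  refine Eq.trans h0 (mnr_congr _ _ _ _ (fun i j => ?_))
  refine rho_X_ne (fun h' => h i j ?_)
  have h1 := he _ (hr i) _ (hs j)
  have h2 := he _ hx0 _ hy0
  rw [h'] at h1
  exact ⟨h1.1.symm.trans h2.1, h1.2.symm.trans h2.2⟩

/-- the conditions of the ideal `N` -/
def TN (S : Finset (ℕ × ℕ × ℕ)) (p q k : ℕ) : Finset (ℕ × ℕ × ℕ) :=
  insert (p, q + 1, k) (insert (p + 1, q, k) S)

variable (S : Finset (ℕ × ℕ × ℕ)) (p q k : ℕ)

theorem rho_G (he : ∀ x < m, ∀ y < n, ex (e x y) = x ∧ ey (e x y) = y)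
    (hp : p + k < m) (hq : q + k < n)
    (hT : ∀ c ∈ S, c.1 + c.2.2 ≤ m ∧ c.2.1 + c.2.2 ≤ n)
    (hS : ∀ c ∈ S, (c.1 ≤ p ∧ c.1 + c.2.2 ≤ p + k) ∨ (c.2.1 ≤ q ∧ c.2.1 + c.2.2 ≤ q + k)) :
    ∀ g ∈ ⋃ c ∈ TN S p q k, Mset (gm K e) c, rho K (e (p + k) (q + k)) g = g := by
  intro g hg
  simp only [Set.mem_iUnion] at hg
  obtain ⟨⟨p', q', k'⟩, hc, r, s, hr, hs, rfl⟩ := hg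
  simp only at hr hs
  have hb : p' + k' ≤ m ∧ q' + k' ≤ n ∧ (p' + k' ≤ p + k ∨ q' + k' ≤ q + k) := by
    simp only [TN, Finset.mem_insert, Prod.mk.injEq] at hc
    rcases hc with h | h | h
    · omega
    · omega
    · have h1 := hT _ h
      have h2 := hS _ h
      simp only at h1 h2
      omega
  refine rho_mnr e ex ey m n he hp hq r s (fun i => ?_) (fun i => ?_) (fun i j => ?_)
  · have := hr i; omega
  · have := hs i; omega
  · have := hr i; have := hs j; omega

/-- the pairs `(g, h)` with `X v * g + h` the minors through the corner -/
def PP (e : ℕ → ℕ → σ) (p q k : ℕ) : Set (MvPolynomial σ K × MvPolynomial σ K) :=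
  {z | ∃ (r s : Fin (k + 1) → ℕ) (i0 j0 : Fin (k + 1)), r i0 = p + k ∧ s j0 = q + k ∧
    (∀ i, i ≠ i0 → r i < p + k) ∧ (∀ j, j ≠ j0 → s j < q + k) ∧
    z = ((-1) ^ (i0 + j0 : ℕ) * mnr (gm K e) (r ∘ i0.succAbove) (s ∘ j0.succAbove),
      rho K (e (p + k) (q + k)) (mnr (gm K e) r s))}

theorem PP_expand (he : ∀ x < m, ∀ y < n, ex (e x y) = x ∧ ey (e x y) = y)
    (hp : p + k < m) (hq : q + k < n) (r s : Fin (k + 1) → ℕ) (i0 j0 : Fin (k + 1))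
    (hi0 : r i0 = p + k) (hj0 : s j0 = q + k)
    (hr : ∀ i, i ≠ i0 → r i < p + k) (hs : ∀ j, j ≠ j0 → s j < q + k) :
    X (e (p + k) (q + k)) * ((-1) ^ (i0 + j0 : ℕ) * mnr (gm K e) (r ∘ i0.succAbove)
      (s ∘ j0.succAbove)) + rho K (e (p + k) (q + k)) (mnr (gm K e) r s) = mnr (gm K e) r s := by
  have h0 := map_mnr (rho K (e (p + k) (q + k)) : MvPolynomial σ K →+* MvPolynomial σ K)
    (gm K e) r s
  have h0' : rho K (e (p + k) (q + k)) (mnr (gm K e) r s) = mnr (fun x y =>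
    rho K (e (p + k) (q + k)) (gm K e x y)) r s := h0
  have := mnr_update (gm K e) (fun x y => rho K (e (p + k) (q + k)) (gm K e x y)) r s (p + k)
    (q + k) i0 j0 hi0 hj0 (fun i hi => (hr i hi).ne) (fun i hi => (hs i hi).ne) ?_
  · rw [h0', this]
    simp only [gm, rho_X_self, sub_zero]
    ring
  · intro i j hij
    refine (rho_X_ne (fun h' => hij ?_)).symm
    have hri : r i < m := by
      by_cases h : i = i0
      · rw [h]; omega
      · have := hr i h; omega
    have hsj : s j < n := by
      by_cases h : j = j0
      · rw [h]; omega
      · have := hs j h; omega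
    have h1 := he _ hri _ hsj
    have h2 := he _ hp _ hq
    rw [h'] at h1
    exact ⟨h1.1.symm.trans h2.1, h1.2.symm.trans h2.2⟩

theorem PP_rho (he : ∀ x < m, ∀ y < n, ex (e x y) = x ∧ ey (e x y) = y)
    (hp : p + k < m) (hq : q + k < n) : ∀ z ∈ PP (K := K) e p q k,
      rho K (e (p + k) (q + k)) z.1 = z.1 ∧ rho K (e (p + k) (q + k)) z.2 = z.2 := by
  rintro _ ⟨r, s, i0, j0, hi0, hj0, hr, hs, rfl⟩
  refine ⟨?_, rho_rho _ _⟩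
  have : rho K (e (p + k) (q + k)) (mnr (gm K e) (r ∘ i0.succAbove) (s ∘ j0.succAbove)) =
      mnr (gm K e) (r ∘ i0.succAbove) (s ∘ j0.succAbove) := by
    refine rho_mnr e ex ey m n he hp hq _ _ (fun i => ?_) (fun i => ?_) (fun i j => ?_)
    · exact (hr _ (Fin.succAbove_ne i0 i)).trans hp
    · exact (hs _ (Fin.succAbove_ne j0 i)).trans hq
    · intro h
      exact (hr _ (Fin.succAbove_ne i0 i)).ne h.1
  simp only [map_mul, map_pow, map_neg, map_one, this]

theorem I_eq (he : ∀ x < m, ∀ y < n, ex (e x y) = x ∧ ey (e x y) = y)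
    (hp : p + k < m) (hq : q + k < n) :
    JJ (gm K e) (insert (p + 1, q + 1, k) S) = JJ (gm K e) (TN S p q k) ⊔
      Ideal.span ((fun x => X (e (p + k) (q + k)) * x.1 + x.2) '' PP (K := K) e p q k) := by
  apply le_antisymm
  · refine JJ_le _ _ (fun p' q' k' hc r s hr hs => ?_)
    rw [Finset.mem_insert] at hc
    rcases hc with hc | hc
    · obtain ⟨rfl, rfl, rfl⟩ : p' = p + 1 ∧ q' = q + 1 ∧ k' = k := by simpa using hc
      by_cases hri : Function.Injective r
      swap
      · rw [mnr_row_not_inj _ _ _ hri]; exact Ideal.zero_mem _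
      by_cases hsi : Function.Injective s
      swap
      · rw [mnr_col_not_inj _ _ _ hsi]; exact Ideal.zero_mem _
      by_cases h1 : ∃ i0, r i0 = p + k'
      swap
      · push Not at h1
        refine Ideal.mem_sup_left (mem_JJ _ (p := p) (q := q + 1) (by simp [TN]) r s ?_ ?_)
        · intro i; have := hr i; have := h1 i; omega
        · intro i; have := hs i; omega
      by_cases h2 : ∃ j0, s j0 = q + k'
      swap
      · push Not at h2
        refine Ideal.mem_sup_left (mem_JJ _ (p := p + 1) (q := q) (by simp [TN]) r s ?_ ?_)
        · intro i; have := hr i; omega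
        · intro i; have := hs i; have := h2 i; omega
      obtain ⟨i0, h1⟩ := h1
      obtain ⟨j0, h2⟩ := h2
      have hr' : ∀ i, i ≠ i0 → r i < p + k' := fun i hi => by
        have := hr i; have : r i ≠ r i0 := fun h => hi (hri h)
        omega
      have hs' : ∀ i, i ≠ j0 → s i < q + k' := fun i hi => by
        have := hs i; have : s i ≠ s j0 := fun h => hi (hsi h)
        omega
      refine Ideal.mem_sup_right (Ideal.subset_span ⟨_, ⟨r, s, i0, j0, h1, h2, hr', hs', rfl⟩, ?_⟩)
      exact PP_expand e ex ey m n p q k' he hp hq r s i0 j0 h1 h2 hr' hs'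
    · exact Ideal.mem_sup_left (mem_JJ _ (by simp [TN, hc]) r s hr hs)
  · refine sup_le (JJ_le _ _ (fun p' q' k' hc r s hr hs => ?_)) ?_
    · simp only [TN, Finset.mem_insert, Prod.mk.injEq] at hc
      rcases hc with ⟨rfl, rfl, rfl⟩ | ⟨rfl, rfl, rfl⟩ | hc
      · refine mem_JJ _ (p := p' + 1) (q := q + 1) (by simp) r s ?_ hs
        intro i; have := hr i; omega
      · refine mem_JJ _ (p := p + 1) (q := q' + 1) (by simp) r s hr ?_
        intro i; have := hs i; omega
      · exact mem_JJ _ (by simp [hc]) r s hr hs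
    · rw [Ideal.span_le]
      rintro _ ⟨_, ⟨r, s, i0, j0, h1, h2, hr', hs', rfl⟩, rfl⟩
      simp only [SetLike.mem_coe]
      rw [PP_expand e ex ey m n p q k he hp hq r s i0 j0 h1 h2 hr' hs']
      refine mem_JJ _ (p := p + 1) (q := q + 1) (by simp) r s ?_ ?_
      · intro i
        by_cases h : i = i0
        · subst h; omega
        · have := hr' i h; omega
      · intro i
        by_cases h : i = j0
        · subst h; omega
        · have := hs' i h; omega

theorem C_eq :
    JJ (gm K e) (insert (p + 1, q + 1, k) S) = JJ (gm K e) (TN S p q (k + 1)) ⊔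
      Ideal.span (Prod.fst '' PP (K := K) e p q (k + 1)) := by
  apply le_antisymm
  · refine JJ_le _ _ (fun p' q' k' hc r s hr hs => ?_)
    rw [Finset.mem_insert] at hc
    rcases hc with hc | hc
    · obtain ⟨rfl, rfl, rfl⟩ : p' = p + 1 ∧ q' = q + 1 ∧ k' = k := by simpa using hc
      refine Ideal.mem_sup_right (Ideal.subset_span ⟨_, ⟨Fin.snoc (α := fun _ => ℕ) r (p + (k' + 1)),
        Fin.snoc (α := fun _ => ℕ) s (q + (k' + 1)), Fin.last _, Fin.last _, by simp, by simp, ?_, ?_,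
        rfl⟩, ?_⟩)
      · intro i hi
        obtain ⟨j, rfl⟩ := Fin.exists_castSucc_eq.2 hi
        have := hr j
        simp only [Fin.snoc_castSucc]
        omega
      · intro i hi
        obtain ⟨j, rfl⟩ := Fin.exists_castSucc_eq.2 hi
        have := hs j
        simp only [Fin.snoc_castSucc]
        omega
      · have e1 : ∀ (t : Fin (k' + 1) → ℕ) (x : ℕ),
            (Fin.snoc (α := fun _ => ℕ) t x) ∘ (Fin.last (k' + 1)).succAbove = t := by
          intro t x; ext i; simp
        simp only [e1]
        rw [Even.neg_one_pow ⟨_, rfl⟩, one_mul]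
    · exact Ideal.mem_sup_left (mem_JJ _ (by simp [TN, hc]) r s hr hs)
  · have hk : ∀ r s : Fin (k + 1) → ℕ, (∀ i, r i < p + 1 + k) → (∀ j, s j < q + 1 + k) →
        mnr (gm K e) r s ∈ JJ (gm K e) (insert (p + 1, q + 1, k) S) := fun r s hr hs =>
      mem_JJ _ (by simp) r s hr hs
    refine sup_le (JJ_le _ _ (fun p' q' k' hc r s hr hs => ?_)) ?_
    · simp only [TN, Finset.mem_insert, Prod.mk.injEq] at hc
      rcases hc with ⟨rfl, rfl, rfl⟩ | ⟨rfl, rfl, rfl⟩ | hc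
      · refine laplace_col _ _ k _ _ hk 1 r s (fun i => ?_) (fun i => ?_)
        · have := hr i; omega
        · have := hs i; omega
      · refine laplace_row _ _ k _ _ hk 1 r s (fun i => ?_) (fun i => ?_)
        · have := hr i; omega
        · have := hs i; omega
      · exact mem_JJ _ (by simp [hc]) r s hr hs
    · rw [Ideal.span_le]
      rintro _ ⟨_, ⟨r, s, i0, j0, h1, h2, hr', hs', rfl⟩, rfl⟩
      refine Ideal.mul_mem_left _ _ (hk _ _ (fun i => ?_) (fun i => ?_))
      · have := hr' _ (Fin.succAbove_ne i0 i)
        simp only [Function.comp_apply]; omega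
      · have := hs' _ (Fin.succAbove_ne j0 i)
        simp only [Function.comp_apply]; omega

theorem supp_zero {p' q' k' : ℕ} (Z : ℕ → ℕ → K)
    (hZ : ∀ x y, (x < p ∨ y < q) → Z x y = 0) (h : p' ≤ p ∨ q' ≤ q)
    (r s : Fin (k' + 1) → ℕ) (hr : ∀ i, r i < p' + k') (hs : ∀ j, s j < q' + k') :
    mnr Z r s = 0 := by
  rcases h with h | h
  · refine mnr_row_supp Z r s p (p' + k') (by omega) (fun i j h => hZ _ _ (Or.inl ?_))
    have := hr i
    omega
  · refine mnr_col_supp Z r s q (q' + k') (by omega) (fun i j h => hZ _ _ (Or.inr ?_))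
    have := hs j
    omega

theorem g0_notin (he : ∀ x < m, ∀ y < n, ex (e x y) = x ∧ ey (e x y) = y)
    (hp : p + k < m) (hq : q + k < n)
    (hT : ∀ c ∈ S, c.1 + c.2.2 ≤ m ∧ c.2.1 + c.2.2 ≤ n)
    (hS : ∀ c ∈ S, (c.1 ≤ p ∧ c.1 + c.2.2 ≤ p + k) ∨ (c.2.1 ≤ q ∧ c.2.1 + c.2.2 ≤ q + k)) :
    mnr (gm K e) (fun i : Fin k => p + (i : ℕ)) (fun j : Fin k => q + (j : ℕ)) ∉
      JJ (gm K e) (TN S p q k) := by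
  intro h
  let Z : ℕ → ℕ → K := fun x y => if p ≤ x ∧ q ≤ y ∧ x + q = y + p then 1 else 0
  have hb : ∀ p' q' k' : ℕ, (p', q', k') ∈ TN S p q k → p' + k' ≤ m ∧ q' + k' ≤ n ∧
      (p' ≤ p ∨ q' ≤ q) := by
    intro p' q' k' hc
    simp only [TN, Finset.mem_insert, Prod.mk.injEq] at hc
    rcases hc with h | h | h
    · omega
    · omega
    · have h1 := hT _ h
      have h2 := hS _ h
      simp only at h1 h2
      omega
  have h1 := eval_zero e ex ey m n he Z _ (fun c hc => ⟨(hb _ _ _ hc).1, (hb _ _ _ hc).2.1⟩) ?_ _ h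
  · rw [eval_JJ e ex ey m n he Z _ _ (fun i => by omega) (fun i => by omega)] at h1
    have : (Matrix.of fun (i j : Fin k) => Z (p + (i : ℕ)) (q + (j : ℕ))) = 1 := by
      ext i j
      rw [Matrix.one_apply]
      simp only [Matrix.of_apply, Z, Fin.ext_iff]
      exact if_congr (by omega) rfl rfl
    rw [mnr, this, Matrix.det_one] at h1
    exact one_ne_zero h1
  · intro p' q' k' hc r s hr hs
    refine supp_zero p q Z (fun x y h => ?_) (hb _ _ _ hc).2.2 r s hr hs
    exact if_neg (by omega)

theorem f0_notin (he : ∀ x < m, ∀ y < n, ex (e x y) = x ∧ ey (e x y) = y)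
    (hp : p + (k + 1) < m) (hq : q + (k + 1) < n)
    (hT : ∀ c ∈ S, c.1 + c.2.2 ≤ m ∧ c.2.1 + c.2.2 ≤ n)
    (hS : ∀ c ∈ S, (c.1 ≤ p ∧ c.1 + c.2.2 ≤ p + (k + 1)) ∨
      (c.2.1 ≤ q ∧ c.2.1 + c.2.2 ≤ q + (k + 1))) :
    mnr (gm K e) (fun i : Fin (k + 2) => p + (i : ℕ)) (fun j : Fin (k + 2) => q + (j : ℕ)) ∉
      JJ (gm K e) (insert (p + 1, q + 1, k) S) := by
  intro h
  let Z : ℕ → ℕ → K := fun x y => if p ≤ x ∧ q ≤ y ∧ x + y = p + q + k + 1 then 1 else 0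
  have hb : ∀ p' q' k' : ℕ, (p', q', k') ∈ insert (p + 1, q + 1, k) S → p' + k' ≤ m ∧ q' + k' ≤ n ∧
      ((p' = p + 1 ∧ q' = q + 1 ∧ k' = k) ∨ (p' ≤ p ∨ q' ≤ q)) := by
    intro p' q' k' hc
    simp only [Finset.mem_insert, Prod.mk.injEq] at hc
    rcases hc with h | h
    · omega
    · have h1 := hT _ h
      have h2 := hS _ h
      simp only at h1 h2
      omega
  have h1 := eval_zero e ex ey m n he Z _ (fun c hc => ⟨(hb _ _ _ hc).1, (hb _ _ _ hc).2.1⟩) ?_ _ h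
  · rw [eval_JJ e ex ey m n he Z _ _ (fun i => by omega) (fun i => by omega)] at h1
    have : (Matrix.of fun (i j : Fin (k + 2)) => Z (p + (i : ℕ)) (q + (j : ℕ))) =
        (1 : Matrix (Fin (k + 2)) (Fin (k + 2)) K).submatrix Fin.revPerm id := by
      ext i j
      simp only [Matrix.of_apply, Z, Matrix.submatrix_apply, Matrix.one_apply, Fin.ext_iff,
        Fin.revPerm_apply, Fin.val_rev, id]
      exact if_congr (by omega) rfl rfl
    rw [mnr, this, Matrix.det_permute, Matrix.det_one, mul_one] at h1
    have h2 := congrArg (fun z => z * z) h1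
    simp only [mul_zero] at h2
    rw [← Int.cast_mul, ← Units.val_mul, Int.units_mul_self] at h2
    simp at h2
  · intro p' q' k' hc r s hr hs
    rcases (hb _ _ _ hc).2.2 with ⟨rfl, rfl, rfl⟩ | h'
    · refine mnr_row_supp Z r s (p + 1) (p + 1 + k') (by omega) (fun i j h => if_neg ?_)
      have := hr i
      have := hs j
      omega
    · refine supp_zero p q Z (fun x y h => ?_) h' r s hr hs
      exact if_neg (by omega)

end step
end LD


namespace LD

theorem field_aux3 {F : Type*} [Field F] {a b c d : F} (hb : b ≠ 0) (h : d + -a / b * c = 0) :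
    a * c - b * d = 0 := by
  have h1 : d = a / b * c := by linear_combination h
  rw [h1]
  field_simp
  ring

section cross
variable {K : Type u} [Field K] {σ : Type} [DecidableEq σ]
variable (e : ℕ → ℕ → σ) (ex ey : σ → ℕ) (m n : ℕ)
variable (S : Finset (ℕ × ℕ × ℕ)) (p q k : ℕ)

theorem mnr_replace {F : Type*} [Field F] (ι : MvPolynomial σ K →+* F) (yy : F)
    (he : ∀ x < m, ∀ y < n, ex (e x y) = x ∧ ey (e x y) = y)
    (hp : p + k < m) (hq : q + k < n) (r s : Fin (k + 1) → ℕ) (i0 j0 : Fin (k + 1))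
    (hi0 : r i0 = p + k) (hj0 : s j0 = q + k)
    (hr : ∀ i, i ≠ i0 → r i < p + k) (hs : ∀ j, j ≠ j0 → s j < q + k) :
    mnr (fun x y => if x = p + k ∧ y = q + k then yy else ι (gm K e x y)) r s =
      ι (rho K (e (p + k) (q + k)) (mnr (gm K e) r s)) + yy * ι ((-1) ^ (i0 + j0 : ℕ) *
        mnr (gm K e) (r ∘ i0.succAbove) (s ∘ j0.succAbove)) := by
  have h0 := map_mnr (ι.comp (rho K (e (p + k) (q + k)) : MvPolynomial σ K →+* MvPolynomial σ K))
    (gm K e) r s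
  have h0' : ι (rho K (e (p + k) (q + k)) (mnr (gm K e) r s)) = mnr (fun x y =>
    ι (rho K (e (p + k) (q + k)) (gm K e x y))) r s := h0
  rw [h0', mnr_update (fun x y => if x = p + k ∧ y = q + k then yy else ι (gm K e x y))
    (fun x y => ι (rho K (e (p + k) (q + k)) (gm K e x y))) r s (p + k)
    (q + k) i0 j0 hi0 hj0 (fun i hi => (hr i hi).ne) (fun i hi => (hs i hi).ne)]
  · congr 1
    simp only [and_self, if_true, gm, rho_X_self, map_zero, sub_zero, map_mul, map_pow, map_neg,
      map_one]
    congr 2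
    rw [map_mnr]
    refine mnr_congr _ _ _ _ (fun i j => ?_)
    exact if_neg (fun h => (hr _ (Fin.succAbove_ne i0 i)).ne h.1)
  · intro i j hij
    simp only [hij, if_false]
    refine congrArg ι (rho_X_ne (fun h' => hij ?_)).symm
    have hri : r i < m := by
      by_cases h : i = i0
      · rw [h]; omega
      · have := hr i h; omega
    have hsj : s j < n := by
      by_cases h : j = j0
      · rw [h]; omega
      · have := hs j h; omega
    have h1 := he _ hri _ hsj
    have h2 := he _ hp _ hq
    rw [h'] at h1
    exact ⟨h1.1.symm.trans h2.1, h1.2.symm.trans h2.2⟩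

/-- the contiguous block at `p` -/
def blk (p k : ℕ) : Fin (k + 1) → ℕ := fun i => p + (i : ℕ)

theorem blk_last (p k : ℕ) : blk p k (Fin.last k) = p + k := by simp [blk]

theorem blk_lt (p k : ℕ) (i : Fin (k + 1)) (hi : i ≠ Fin.last k) : blk p k i < p + k := by
  have : (i : ℕ) ≠ k := fun h => hi (Fin.ext h)
  have := i.2
  simp only [blk]
  omega

theorem blk_comp (p k : ℕ) : blk p k ∘ (Fin.last k).succAbove = fun i : Fin k => p + (i : ℕ) := by
  ext i; simp [blk]

theorem PP_zero : (mnr (gm K e) (fun i : Fin k => p + (i : ℕ)) (fun j : Fin k => q + (j : ℕ)),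
    rho K (e (p + k) (q + k)) (mnr (gm K e) (blk p k) (blk q k))) ∈ PP (K := K) e p q k := by
  refine ⟨blk p k, blk q k, Fin.last k, Fin.last k, blk_last _ _, blk_last _ _, blk_lt _ _,
    blk_lt _ _, ?_⟩
  rw [blk_comp, blk_comp, Even.neg_one_pow ⟨_, rfl⟩, one_mul]

theorem cross (he : ∀ x < m, ∀ y < n, ex (e x y) = x ∧ ey (e x y) = y)
    (hp : p + k < m) (hq : q + k < n)
    (N : Ideal (MvPolynomial σ K)) (hN : N = JJ (gm K e) (TN S p q k)) (pN : N.IsPrime)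
    (g0 h0 : MvPolynomial σ K)
    (hg0 : g0 = mnr (gm K e) (fun i : Fin k => p + (i : ℕ)) (fun j : Fin k => q + (j : ℕ)))
    (hh0 : h0 = rho K (e (p + k) (q + k)) (mnr (gm K e) (blk p k) (blk q k)))
    (hg : g0 ∉ N) : ∀ x ∈ PP (K := K) e p q k, h0 * x.1 - g0 * x.2 ∈ N := by
  let F := FractionRing (MvPolynomial σ K ⧸ N)
  let ι : MvPolynomial σ K →+* F := (algebraMap (MvPolynomial σ K ⧸ N) F).comp
    (Ideal.Quotient.mk N)
  have hι : ∀ x, ι x = 0 ↔ x ∈ N := by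
    intro x
    rw [RingHom.comp_apply, FaithfulSMul.algebraMap_eq_zero_iff, Ideal.Quotient.eq_zero_iff_mem]
  have hg0' : ι g0 ≠ 0 := fun h => hg ((hι _).1 h)
  let yy : F := - ι h0 / ι g0
  let A : ℕ → ℕ → F := fun x y => if x = p + k ∧ y = q + k then yy else ι (gm K e x y)
  have hA : ∀ r s : Fin (k + 1) → ℕ, (∀ i, r i < p + 1 + k) → (∀ j, s j < q + 1 + k) →
      mnr A r s = 0 := by
    intro r s hr hs
    refine dl A k (p + 1 + k) (q + 1 + k) (blk p k) (blk q k) ?_ ?_ r s hr hs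
    · have : mnr A (fun i : Fin k => blk p k i.castSucc) (fun i : Fin k => blk q k i.castSucc)
          = ι g0 := by
        rw [hg0, map_mnr]
        refine mnr_congr _ _ _ _ (fun i j => if_neg ?_)
        have := i.2
        simp only [blk, Fin.val_castSucc]
        omega
      rw [this]; exact hg0'
    · intro x hx y hy
      by_cases hxy : x = p + k ∧ y = q + k
      · have hsn : ∀ p : ℕ, (Fin.snoc (fun i : Fin k => blk p k i.castSucc) (p + k) :
            Fin (k + 1) → ℕ) = blk p k := by
          intro p
          ext i
          refine Fin.lastCases ?_ (fun i => ?_) i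
          · simp [blk]
          · simp
        rw [hxy.1, hxy.2, hsn, hsn, mnr_replace e ex ey m n p q k ι yy he hp hq _ _ (Fin.last k)
          (Fin.last k) (blk_last _ _) (blk_last _ _) (blk_lt _ _) (blk_lt _ _), blk_comp, blk_comp,
          Even.neg_one_pow ⟨_, rfl⟩, one_mul, ← hg0, ← hh0, div_mul_cancel₀ _ hg0', add_neg_cancel]
      · set r' : Fin (k + 1) → ℕ := Fin.snoc (fun i : Fin k => blk p k i.castSucc) x with hr'
        set s' : Fin (k + 1) → ℕ := Fin.snoc (fun i : Fin k => blk q k i.castSucc) y with hs'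
        have hb : ∀ (p x : ℕ) (j : Fin (k + 1)), (Fin.snoc (fun i : Fin k => blk p k i.castSucc) x :
            Fin (k + 1) → ℕ) j < p + k ∨ (Fin.snoc (fun i : Fin k => blk p k i.castSucc) x :
            Fin (k + 1) → ℕ) j = x := by
          intro p x j
          refine Fin.lastCases ?_ (fun i => ?_) j
          · right; simp
          · left
            have := i.2
            simp [blk]
        have h1 : mnr A r' s' = ι (mnr (gm K e) r' s') := by
          rw [map_mnr]
          refine mnr_congr _ _ _ _ (fun i j => if_neg ?_)
          have h1 := hb p x i
          have h2 := hb q y j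
          rw [← hr'] at h1
          rw [← hs'] at h2
          omega
        rw [h1, hι, hN]
        by_cases hx' : x = p + k
        · refine mem_JJ _ (p := p + 1) (q := q) (by simp [TN]) r' s' (fun i => ?_) (fun j => ?_)
          · have h1 := hb p x i
            rw [← hr'] at h1
            omega
          · have h1 := hb q y j
            rw [← hs'] at h1
            omega
        · refine mem_JJ _ (p := p) (q := q + 1) (by simp [TN]) r' s' (fun i => ?_) (fun j => ?_)
          · have h1 := hb p x i
            rw [← hr'] at h1
            omega
          · have h1 := hb q y j
            rw [← hs'] at h1
            omega
  rintro _ ⟨r, s, i0, j0, h1, h2, hr', hs', rfl⟩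
  have h3 := hA r s (fun i => ?_) (fun i => ?_)
  · rw [mnr_replace e ex ey m n p q k ι yy he hp hq r s i0 j0 h1 h2 hr' hs'] at h3
    rw [← hι, map_sub, map_mul ι h0, map_mul ι g0]
    exact field_aux3 hg0' h3
  · by_cases h : i = i0
    · subst h; omega
    · have := hr' i h; omega
  · by_cases h : i = j0
    · subst h; omega
    · have := hs' i h; omega

theorem step_succ (he : ∀ x < m, ∀ y < n, ex (e x y) = x ∧ ey (e x y) = y)
    (M : ModuleCat.{u} (MvPolynomial σ K))
    (hp : p + (k + 1) < m) (hq : q + (k + 1) < n)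
    (hT : ∀ c ∈ S, c.1 + c.2.2 ≤ m ∧ c.2.1 + c.2.2 ≤ n)
    (hS : ∀ c ∈ S, (c.1 ≤ p ∧ c.1 + c.2.2 ≤ p + (k + 1)) ∨
      (c.2.1 ≤ q ∧ c.2.1 + c.2.2 ≤ q + (k + 1)))
    (pN : (JJ (gm K e) (TN S p q (k + 1))).IsPrime)
    (pC : (JJ (gm K e) (insert (p + 1, q + 1, k) S)).IsPrime) :
    (JJ (gm K e) (insert (p + 1, q + 1, k + 1) S)).IsPrime ∧
    JJ (gm K e) (TN S p q (k + 1)) < JJ (gm K e) (insert (p + 1, q + 1, k + 1) S) ∧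
    ∀ d, ExtDepth M (MvPolynomial σ K ⧸ JJ (gm K e) (TN S p q (k + 1))) (d + 1) →
      ExtDepth M (MvPolynomial σ K ⧸ JJ (gm K e) (insert (p + 1, q + 1, k) S)) d →
      ExtDepth M (MvPolynomial σ K ⧸ JJ (gm K e) (insert (p + 1, q + 1, k + 1) S)) d := by
  have hg := g0_notin (K := K) e ex ey m n S p q (k + 1) he hp hq hT hS
  refine elim_step (e (p + (k + 1)) (q + (k + 1))) M (⋃ c ∈ TN S p q (k + 1), Mset (gm K e) c)
    (PP e p q (k + 1)) _ _ _ _ _ rfl (rho_G e ex ey m n S p q (k + 1) he hp hq hT hS)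
    (PP_rho e ex ey m n p q (k + 1) he hp hq) (PP_zero e p q (k + 1))
    (cross e ex ey m n S p q (k + 1) he hp hq _ rfl pN _ _ rfl rfl hg) (C_eq e S p q k)
    (I_eq e ex ey m n S p q (k + 1) he hp hq) pN pC ?_ hg
  intro hh
  apply f0_notin (K := K) e ex ey m n S p q k he hp hq hT hS
  have h1 := PP_expand (K := K) e ex ey m n p q (k + 1) he hp hq (blk p (k + 1)) (blk q (k + 1))
    (Fin.last _) (Fin.last _) (blk_last _ _) (blk_last _ _) (blk_lt _ _) (blk_lt _ _)
  change mnr (gm K e) (blk p (k + 1)) (blk q (k + 1)) ∈ _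
  rw [← h1]
  refine Ideal.add_mem _ (Ideal.mul_mem_left _ _ (Ideal.mul_mem_left _ _ ?_)) hh
  rw [blk_comp, blk_comp]
  refine mem_JJ _ (p := p + 1) (q := q + 1) (by simp) _ _ (fun i => ?_) (fun i => ?_)
  · have := i.2; omega
  · have := i.2; omega

theorem step_zero (he : ∀ x < m, ∀ y < n, ex (e x y) = x ∧ ey (e x y) = y)
    (M : ModuleCat.{u} (MvPolynomial σ K))
    (hp : p < m) (hq : q < n)
    (hT : ∀ c ∈ S, c.1 + c.2.2 ≤ m ∧ c.2.1 + c.2.2 ≤ n)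
    (hS : ∀ c ∈ S, (c.1 ≤ p ∧ c.1 + c.2.2 ≤ p) ∨ (c.2.1 ≤ q ∧ c.2.1 + c.2.2 ≤ q))
    (pN : (JJ (gm K e) (TN S p q 0)).IsPrime) :
    (JJ (gm K e) (insert (p + 1, q + 1, 0) S)).IsPrime ∧
    JJ (gm K e) (TN S p q 0) < JJ (gm K e) (insert (p + 1, q + 1, 0) S) ∧
    ∀ d, ExtDepth M (MvPolynomial σ K ⧸ JJ (gm K e) (TN S p q 0)) (d + 1) →
      ExtDepth M (MvPolynomial σ K ⧸ JJ (gm K e) (insert (p + 1, q + 1, 0) S)) d := by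
  refine elim_step_zero (e (p + 0) (q + 0)) M (⋃ c ∈ TN S p q 0, Mset (gm K e) c) _ _ rfl
    (rho_G e ex ey m n S p q 0 he hp hq hT hS) ?_ pN
  rw [I_eq e ex ey m n S p q 0 he hp hq]
  congr 2
  ext f
  simp only [Set.mem_image, Set.mem_singleton_iff]
  have key : ∀ (r s : Fin 1 → ℕ) (i0 j0 : Fin 1), r i0 = p + 0 → s j0 = q + 0 →
      mnr (gm K e) r s = X (e (p + 0) (q + 0)) := by
    intro r s i0 j0 h1 h2
    obtain rfl := Subsingleton.elim 0 i0
    obtain rfl := Subsingleton.elim 0 j0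
    rw [mnr, Matrix.det_fin_one]
    simp only [Matrix.of_apply, h1, h2, gm]
  constructor
  · rintro ⟨_, ⟨r, s, i0, j0, h1, h2, hr', hs', rfl⟩, rfl⟩
    rw [PP_expand e ex ey m n p q 0 he hp hq r s i0 j0 h1 h2 hr' hs']
    exact key r s i0 j0 h1 h2
  · rintro rfl
    refine ⟨_, ⟨fun _ => p + 0, fun _ => q + 0, 0, 0, rfl, rfl, ?_, ?_, rfl⟩, ?_⟩
    · intro i hi; exact absurd (Subsingleton.elim (α := Fin 1) i 0) hi
    · intro i hi; exact absurd (Subsingleton.elim (α := Fin 1) i 0) hi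
    · rw [PP_expand e ex ey m n p q 0 he hp hq (fun _ => p + 0) (fun _ => q + 0) 0 0 rfl rfl
        (fun i hi => absurd (Subsingleton.elim (α := Fin 1) i 0) hi)
        (fun i hi => absurd (Subsingleton.elim (α := Fin 1) i 0) hi)]
      exact key _ _ 0 0 rfl rfl

end cross
end LD


namespace LD

/-- comparison of conditions -/
def cle (c c' : ℕ × ℕ × ℕ) : Prop :=
  c.1 ≤ c'.1 ∧ c.1 + c.2.2 ≤ c'.1 + c'.2.2 ∧ c'.2.1 ≤ c.2.1 ∧ c'.2.1 + c'.2.2 ≤ c.2.1 + c.2.2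

/-- a set of conditions is a chain -/
def chain (T : Finset (ℕ × ℕ × ℕ)) : Prop := ∀ c ∈ T, ∀ c' ∈ T, cle c c' ∨ cle c' c

/-- the cells counted by the codimension -/
def cells (T : Finset (ℕ × ℕ × ℕ)) : Finset (ℕ × ℕ) :=
  T.biUnion fun c => Finset.range c.1 ×ˢ Finset.range c.2.1

theorem mem_cells {T : Finset (ℕ × ℕ × ℕ)} {z : ℕ × ℕ} :
    z ∈ cells T ↔ ∃ c ∈ T, z.1 < c.1 ∧ z.2 < c.2.1 := by
  simp [cells, Finset.mem_biUnion]

theorem chain_mono {T T' : Finset (ℕ × ℕ × ℕ)} (h : T ⊆ T') (hT : chain T') : chain T :=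
  fun c hc c' hc' => hT c (h hc) c' (h hc')

theorem cle_refl (c : ℕ × ℕ × ℕ) : cle c c := ⟨le_rfl, le_rfl, le_rfl, le_rfl⟩

theorem chain_insert {T : Finset (ℕ × ℕ × ℕ)} {c : ℕ × ℕ × ℕ} (hT : chain T)
    (h : ∀ c' ∈ T, cle c c' ∨ cle c' c) : chain (insert c T) := by
  intro x hx y hy
  rw [Finset.mem_insert] at hx hy
  rcases hx with rfl | hx <;> rcases hy with rfl | hy
  · exact Or.inl (cle_refl _)
  · exact h y hy
  · exact (h x hx).symm
  · exact hT x hx y hy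

/-- total size -/
def wt (T : Finset (ℕ × ℕ × ℕ)) : ℕ := ∑ c ∈ T, (c.2.2 + 1)

theorem wt_insert_le (T : Finset (ℕ × ℕ × ℕ)) (c : ℕ × ℕ × ℕ) :
    wt (insert c T) ≤ (c.2.2 + 1) + wt T := by
  by_cases h : c ∈ T
  · rw [Finset.insert_eq_of_mem h]; omega
  · rw [wt, Finset.sum_insert h]; rfl

theorem wt_erase (T : Finset (ℕ × ℕ × ℕ)) (c : ℕ × ℕ × ℕ) (h : c ∈ T) :
    wt T = (c.2.2 + 1) + wt (T.erase c) := by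
  rw [wt, wt, Finset.add_sum_erase T (fun c => c.2.2 + 1) h]

theorem exists_top (T : Finset (ℕ × ℕ × ℕ)) (h : T.Nonempty) :
    ∃ c ∈ T, ∀ c' ∈ T, c'.1 + c'.2.2 ≤ c.1 + c.2.2 ∧
      (c'.1 + c'.2.2 = c.1 + c.2.2 → c'.2.1 + c'.2.2 ≤ c.2.1 + c.2.2) := by
  obtain ⟨c, hc, hmax⟩ := T.exists_max_image
    (fun c => toLex (c.1 + c.2.2, c.2.1 + c.2.2)) h
  refine ⟨c, hc, fun c' hc' => ?_⟩
  have := hmax c' hc'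
  rw [Prod.Lex.toLex_le_toLex] at this
  simp only at this
  omega

section drop
variable {R : Type*} [CommRing R] (A : ℕ → ℕ → R)

theorem drop_zero (T : Finset (ℕ × ℕ × ℕ)) (p q k : ℕ) (hc : (p, q, k) ∈ T) (h : p = 0 ∨ q = 0) :
    JJ A (T.erase (p, q, k)) = JJ A T ∧ cells (T.erase (p, q, k)) = cells T := by
  constructor
  · refine le_antisymm (JJ_mono A (Finset.erase_subset _ _)) (JJ_le A _ ?_)
    intro p' q' k' hc' r s hr hs
    by_cases heq : (p', q', k') = (p, q, k)
    · obtain ⟨rfl, rfl, rfl⟩ : p' = p ∧ q' = q ∧ k' = k := by simpa using heq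
      have : mnr A r s = 0 := by
        rcases h with rfl | rfl
        · refine mnr_row_supp A r s 0 k' (by omega) (fun i j h => ?_)
          have := hr i
          omega
        · refine mnr_col_supp A r s 0 k' (by omega) (fun i j h => ?_)
          have := hs j
          omega
      rw [this]; exact Ideal.zero_mem _
    · exact mem_JJ A (Finset.mem_erase.2 ⟨heq, hc'⟩) r s hr hs
  · ext z
    rw [mem_cells, mem_cells]
    constructor
    · rintro ⟨c, hc, h⟩; exact ⟨c, Finset.mem_of_mem_erase hc, h⟩
    · rintro ⟨c, hc, h1⟩
      refine ⟨c, Finset.mem_erase.2 ⟨?_, hc⟩, h1⟩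
      rintro rfl
      simp only at h1
      omega

theorem drop_red (T : Finset (ℕ × ℕ × ℕ)) (hT : chain T) (p q k : ℕ) (hc : (p, q, k) ∈ T)
    (p' q' k' : ℕ) (hc' : (p', q', k') ∈ T) (hne : (p', q', k') ≠ (p, q, k))
    (hp : p ≤ p') (hq : q ≤ q') :
    JJ A (T.erase (p, q, k)) = JJ A T ∧ cells (T.erase (p, q, k)) = cells T := by
  have hin : (p', q', k') ∈ T.erase (p, q, k) := Finset.mem_erase.2 ⟨hne, hc'⟩
  constructor
  · refine le_antisymm (JJ_mono A (Finset.erase_subset _ _)) (JJ_le A _ ?_)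
    intro p₁ q₁ k₁ hc₁ r s hr hs
    by_cases heq : (p₁, q₁, k₁) = (p, q, k)
    · obtain ⟨rfl, rfl, rfl⟩ : p₁ = p ∧ q₁ = q ∧ k₁ = k := by simpa using heq
      have hk : ∀ r s : Fin (k' + 1) → ℕ, (∀ i, r i < p' + k') → (∀ j, s j < q' + k') →
        mnr A r s ∈ JJ A (T.erase (p₁, q₁, k₁)) := fun r s hr hs => mem_JJ A hin r s hr hs
      rcases hT _ hc _ hc' with h | h
      · simp only [cle] at h
        obtain ⟨d, rfl⟩ : ∃ d, k₁ = k' + d := ⟨k₁ - k', by omega⟩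
        refine laplace_col _ A k' _ _ hk d r s (fun i => ?_) (fun i => ?_)
        · have := hr i; omega
        · have := hs i; omega
      · simp only [cle] at h
        obtain ⟨d, rfl⟩ : ∃ d, k₁ = k' + d := ⟨k₁ - k', by omega⟩
        refine laplace_row _ A k' _ _ hk d r s (fun i => ?_) (fun i => ?_)
        · have := hr i; omega
        · have := hs i; omega
    · exact mem_JJ A (Finset.mem_erase.2 ⟨heq, hc₁⟩) r s hr hs
  · ext z
    rw [mem_cells, mem_cells]
    constructor
    · rintro ⟨c, hc, h⟩; exact ⟨c, Finset.mem_of_mem_erase hc, h⟩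
    · rintro ⟨c, hc, h1⟩
      by_cases hcc : c = (p, q, k)
      · subst hcc
        refine ⟨_, hin, ?_⟩
        simp only at h1 ⊢
        omega
      · exact ⟨c, Finset.mem_erase.2 ⟨hcc, hc⟩, h1⟩

end drop

theorem dim_step {x : WithBot ℕ∞} {d : ℕ} (h : x + 1 ≤ ((d + 1 : ℕ) : WithBot ℕ∞)) :
    x ≤ (d : WithBot ℕ∞) := by
  induction x using WithBot.recBotCoe with
  | bot => exact bot_le
  | coe x =>
    have h' : x + 1 ≤ ((d + 1 : ℕ) : ℕ∞) := by exact_mod_cast h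
    have : x ≤ (d : ℕ∞) := by
      rw [Nat.cast_add, Nat.cast_one] at h'
      exact (ENat.add_le_add_iff_right (by simp)).1 h'
    exact_mod_cast this

section main
variable {K : Type u} [Field K] {σ : Type} [DecidableEq σ] [Fintype σ]
variable (e : ℕ → ℕ → σ) (ex ey : σ → ℕ) (m n : ℕ)

/-- the inductive claim -/
def good (K : Type u) [Field K] (e : ℕ → ℕ → σ) (T : Finset (ℕ × ℕ × ℕ)) : Prop :=
  (JJ (gm K e) T).IsPrime ∧
    ExtDepth (resK K σ) (MvPolynomial σ K ⧸ JJ (gm K e) T) (Fintype.card σ - (cells T).card) ∧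
    ringKrullDim (MvPolynomial σ K ⧸ JJ (gm K e) T) ≤ (Fintype.card σ - (cells T).card : ℕ)

theorem good_of_eq {T T' : Finset (ℕ × ℕ × ℕ)} (h1 : JJ (gm K e) T' = JJ (gm K e) T)
    (h2 : cells T' = cells T) (h : good K e T') : good K e T := by
  rw [good] at h ⊢
  rw [h1, h2] at h
  exact h

theorem good_empty : good K e ∅ := by
  have : JJ (gm K e) ∅ = ⊥ := by simp [JJ]
  rw [good, this]
  refine ⟨Ideal.isPrime_bot, ?_, ?_⟩
  · simpa [cells] using extDepth_bot (K := K) (σ := σ)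
  · simpa [cells] using dim_bot (K := K) (σ := σ)

theorem cells_card_le (hcard : m * n ≤ Fintype.card σ) (T : Finset (ℕ × ℕ × ℕ))
    (hr : ∀ c ∈ T, c.1 + c.2.2 ≤ m ∧ c.2.1 + c.2.2 ≤ n) :
    (cells T).card ≤ Fintype.card σ := by
  refine le_trans (Finset.card_le_card (t := Finset.range m ×ˢ Finset.range n) ?_) (by simpa)
  intro z hz
  obtain ⟨c, hc, h⟩ := mem_cells.1 hz
  have := hr c hc
  simp only [Finset.mem_product, Finset.mem_range]
  omega

theorem cells_TN (S : Finset (ℕ × ℕ × ℕ)) (p q k : ℕ) (hS : ∀ c ∈ S, c.1 ≤ p ∨ c.2.1 ≤ q) :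
    (cells (insert (p + 1, q + 1, k) S)).card = (cells (TN S p q k)).card + 1 := by
  have : cells (insert (p + 1, q + 1, k) S) = insert (p, q) (cells (TN S p q k)) := by
    ext ⟨x, y⟩
    rw [mem_cells, Finset.mem_insert, mem_cells]
    simp only [TN, Finset.mem_insert, exists_eq_or_imp, Prod.mk.injEq]
    constructor
    · rintro (h | h)
      · omega
      · exact Or.inr (Or.inr (Or.inr h))
    · rintro (h | h | h | h)
      · omega
      · omega
      · omega
      · exact Or.inr h
  rw [this, Finset.card_insert_of_notMem]
  rw [mem_cells]
  rintro ⟨c, hc, h⟩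
  simp only [TN, Finset.mem_insert] at hc
  rcases hc with rfl | rfl | hc
  · simp at h
  · simp at h
  · have := hS c hc
    simp only at h
    omega

theorem main_ind (he : ∀ x < m, ∀ y < n, ex (e x y) = x ∧ ey (e x y) = y)
    (hcard : m * n ≤ Fintype.card σ) :
    ∀ (N W : ℕ) (T : Finset (ℕ × ℕ × ℕ)), (cells T).card = N → wt T = W → chain T →
      (∀ c ∈ T, c.1 + c.2.2 ≤ m ∧ c.2.1 + c.2.2 ≤ n) → good K e T := by
  intro N
  induction N using Nat.strong_induction_on with
  | _ N ihN =>
  intro W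
  induction W using Nat.strong_induction_on with
  | _ W ihW =>
  intro T hN hW hch hrg
  rcases T.eq_empty_or_nonempty with rfl | hne
  · exact good_empty e
  obtain ⟨⟨p, q, k⟩, hc, hmax⟩ := exists_top T hne
  have hdrop : JJ (gm K e) (T.erase (p, q, k)) = JJ (gm K e) T ∧
      cells (T.erase (p, q, k)) = cells T → good K e T := by
    rintro ⟨h1, h2⟩
    refine good_of_eq e h1 h2 ?_
    have hw := wt_erase T _ hc
    exact ihW (wt (T.erase (p, q, k))) (by omega) _ (by rw [h2, hN]) rfl
      (chain_mono (Finset.erase_subset _ _) hch)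
      (fun c hc => hrg c (Finset.mem_of_mem_erase hc))
  by_cases h0 : p = 0 ∨ q = 0
  · exact hdrop (drop_zero _ T p q k hc h0)
  by_cases h1 : ∃ c ∈ T, c ≠ (p, q, k) ∧ p ≤ c.1 ∧ q ≤ c.2.1
  · obtain ⟨⟨p', q', k'⟩, hc', hne', hp', hq'⟩ := h1
    exact hdrop (drop_red _ T hch p q k hc p' q' k' hc' hne' hp' hq')
  push Not at h0 h1
  obtain ⟨p, rfl⟩ := Nat.exists_eq_succ_of_ne_zero h0.1
  obtain ⟨q, rfl⟩ := Nat.exists_eq_succ_of_ne_zero h0.2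
  simp only [Nat.succ_eq_add_one] at *
  have hrc := hrg _ hc
  simp only at hrc
  set S := T.erase (p + 1, q + 1, k) with hSdef
  have hTS : insert (p + 1, q + 1, k) S = T := Finset.insert_erase hc
  have hchS : chain S := chain_mono (Finset.erase_subset _ _) hch
  have hrS : ∀ c ∈ S, c.1 + c.2.2 ≤ m ∧ c.2.1 + c.2.2 ≤ n :=
    fun c hc => hrg c (Finset.mem_of_mem_erase hc)
  -- strict position of the other conditions
  have hpos : ∀ c ∈ S,
      (c.1 ≤ p ∧ c.1 + c.2.2 ≤ p + k ∧ q + 1 ≤ c.2.1 ∧ q + 1 + k ≤ c.2.1 + c.2.2) ∨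
      (c.2.1 ≤ q ∧ c.2.1 + c.2.2 ≤ q + k ∧ p + 1 ≤ c.1 ∧ p + 1 + k = c.1 + c.2.2) := by
    rintro ⟨p', q', k'⟩ hc'
    have hc'T := Finset.mem_of_mem_erase hc'
    have hne' := Finset.ne_of_mem_erase hc'
    have e1 := hmax _ hc'T
    have e2 := h1 _ hc'T hne'
    have e3 := hch _ hc _ hc'T
    simp only [cle] at e1 e2 e3 ⊢
    omega
  have hS : ∀ c ∈ S, (c.1 ≤ p ∧ c.1 + c.2.2 ≤ p + k) ∨ (c.2.1 ≤ q ∧ c.2.1 + c.2.2 ≤ q + k) :=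
    fun c hc => by have := hpos c hc; omega
  have hcT := cells_TN S p q k (fun c hc => by have := hpos c hc; omega)
  rw [hTS] at hcT
  have hle := cells_card_le m n hcard T hrg
  -- the ideal `N`
  have gN : good K e (TN S p q k) := by
    refine ihN (cells (TN S p q k)).card (by omega) _ _ rfl rfl ?_ ?_
    · refine chain_insert (chain_insert hchS ?_) ?_
      · intro c hc
        have := hpos c hc
        simp only [cle]
        omega
      · intro c hc
        rw [Finset.mem_insert] at hc
        rcases hc with rfl | hc
        · simp only [cle]; omega
        · have := hpos c hc
          simp only [cle]
          omega
    · intro c hc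
      simp only [TN, Finset.mem_insert] at hc
      rcases hc with rfl | rfl | hc
      · simp only; omega
      · simp only; omega
      · exact hrS c hc
  obtain ⟨pN, dN, kN⟩ := gN
  have hd : Fintype.card σ - (cells (TN S p q k)).card = Fintype.card σ - (cells T).card + 1 := by
    omega
  rw [hd] at dN kN
  have fin : ∀ (hI : (JJ (gm K e) T).IsPrime) (hlt : JJ (gm K e) (TN S p q k) < JJ (gm K e) T)
      (hD : ExtDepth (resK K σ) (MvPolynomial σ K ⧸ JJ (gm K e) T)
        (Fintype.card σ - (cells T).card)), good K e T := by
    intro hI hlt hD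
    exact ⟨hI, hD, dim_step ((dim_lt _ _ hlt).trans kN)⟩
  rcases k with _ | k
  · obtain ⟨a1, a2, a3⟩ := step_zero (K := K) e ex ey m n S p q he (resK K σ) (by omega) (by omega) hrS
      (by simpa using hS) pN
    rw [hTS] at a1 a2 a3
    exact fin a1 a2 (a3 _ dN)
  · have hcC : cells (insert (p + 1, q + 1, k) S) = cells T := by
      rw [← hTS]
      ext z
      rw [mem_cells, mem_cells]
      simp only [Finset.mem_insert, exists_eq_or_imp]
    have gC : good K e (insert (p + 1, q + 1, k) S) := by
      have hw := wt_erase T _ hc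
      have hw2 := wt_insert_le S (p + 1, q + 1, k)
      rw [← hSdef] at hw
      simp only at hw hw2
      refine ihW (wt (insert (p + 1, q + 1, k) S)) (by omega) _ (by rw [hcC, hN]) rfl ?_ ?_
      · refine chain_insert hchS ?_
        intro c hc
        have := hpos c hc
        simp only [cle]
        omega
      · intro c hc
        rw [Finset.mem_insert] at hc
        rcases hc with rfl | hc
        · simp only; omega
        · exact hrS c hc
    obtain ⟨pC, dC, kC⟩ := gC
    rw [hcC] at dC
    obtain ⟨a1, a2, a3⟩ := step_succ (K := K) e ex ey m n S p q k he (resK K σ) (by omega) (by omega)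
      hrS hS pN pC
    rw [hTS] at a1 a2 a3
    exact fin a1 a2 (a3 _ dN dC)

end main
end LD

namespace LD

theorem mnr_perm {R : Type*} [CommRing R] (I : Ideal R) (A : ℕ → ℕ → R) {k : ℕ} (r s : Fin k → ℕ)
    (π τ : Equiv.Perm (Fin k)) (h : mnr A (r ∘ π) (s ∘ τ) ∈ I) : mnr A r s ∈ I := by
  have h1 : mnr A r s = ((Equiv.Perm.sign π⁻¹ : ℤ) : R) * (((Equiv.Perm.sign τ⁻¹ : ℤ) : R) *
      mnr A (r ∘ π) (s ∘ τ)) := by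
    rw [mnr, mnr, ← Matrix.det_permute', ← Matrix.det_permute]
    congr 1
    ext i j
    simp
  rw [h1]
  exact I.mul_mem_left _ (I.mul_mem_left _ h)

section final
variable {K : Type u} [Field K] (m n : ℕ)

/-- the position of the variable `(x, y)` (0-based, columns reversed) -/
def pos (hm : 1 ≤ m) (hn : 1 ≤ n) (x y : ℕ) : (Set.Icc 1 m ×ˢ Set.Icc 1 n : Set (ℕ × ℕ)) :=
  if h : x < m ∧ y < n then ⟨(x + 1, n - y), by
    simp only [Set.mem_prod, Set.mem_Icc]; omega⟩
  else ⟨(1, 1), by simp only [Set.mem_prod, Set.mem_Icc]; omega⟩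

theorem pos_spec (hm : 1 ≤ m) (hn : 1 ≤ n) (x : ℕ) (hx : x < m) (y : ℕ) (hy : y < n) :
    (pos m n hm hn x y).1 = (x + 1, n - y) := by
  rw [pos, dif_pos ⟨hx, hy⟩]

theorem chain_aux (s : ℕ) (a b t : ℕ → ℕ)
    (hmono : ∀ i, 1 ≤ i → i < s → a i ≤ a (i + 1) ∧ b i ≤ b (i + 1))
    (hgap : ∀ i, 2 ≤ i → i ≤ s →
      ((b (i - 1) : ℤ) - b i < (t i : ℤ) - t (i - 1)) ∧
      ((t i : ℤ) - t (i - 1) < (a i : ℤ) - a (i - 1))) (i : ℕ) (hi : 1 ≤ i) (j : ℕ) (hij : i ≤ j) :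
    j ≤ s → a i ≤ a j ∧ b i ≤ b j ∧ a i + t j ≤ a j + t i ∧ b i + t i ≤ b j + t j := by
  induction j, hij using Nat.le_induction with
  | base => intro _; omega
  | succ j hj ih =>
    intro hs
    have h1 := ih (by omega)
    have h2 := hmono j (by omega) (by omega)
    have h3 := hgap (j + 1) (by omega) hs
    rw [Nat.add_sub_cancel] at h3
    omega

theorem gen_mem (hm : 1 ≤ m) (hn : 1 ≤ n) (I : Ideal (MvPolynomial
      (Set.Icc 1 m ×ˢ Set.Icc 1 n : Set (ℕ × ℕ)) K)) (a b t k : ℕ) (ht : t = k + 1)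
    (hb : 1 ≤ b) (ha : a ≤ m) (hbn : b ≤ n)
    (h : ∀ r s : Fin (k + 1) → ℕ, (∀ i, r i < a) → (∀ j, s j < n + 1 - b) →
      mnr (gm K (pos m n hm hn)) r s ∈ I)
    (r c : Fin t → ℕ) (hV : ∀ x y, (r x, c y) ∈ (Set.Icc 1 m ×ˢ Set.Icc 1 n : Set (ℕ × ℕ)))
    (hr : ∀ x, r x ≤ a) (hc : ∀ x, b ≤ c x) :
    Matrix.det (Matrix.of fun x y => (MvPolynomial.X ⟨(r x, c y), hV x y⟩ :
        MvPolynomial (Set.Icc 1 m ×ˢ Set.Icc 1 n : Set (ℕ × ℕ)) K)) ∈ I := by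
  subst ht
  have hV' : ∀ x y, 1 ≤ r x ∧ r x ≤ m ∧ 1 ≤ c y ∧ c y ≤ n := by
    intro x y
    have := hV x y
    simp only [Set.mem_prod, Set.mem_Icc] at this
    omega
  have h1 := h (fun x => r x - 1) (fun y => n - c y) (fun x => ?_) (fun y => ?_)
  · rw [mnr] at h1
    convert h1 using 3
    ext x y : 2
    have := hV' x y
    rw [gm]
    congr 1
    apply Subtype.ext
    rw [pos_spec m n hm hn _ (by omega) _ (by omega)]
    simp only [Prod.mk.injEq]
    omega
  · have := hV' x 0; have := hr x; omega
  · have := hV' 0 y; have := hc y; omega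

theorem mnr_mem_sorted (hm : 1 ≤ m) (hn : 1 ≤ n) (I : Ideal (MvPolynomial
      (Set.Icc 1 m ×ˢ Set.Icc 1 n : Set (ℕ × ℕ)) K)) (a b t k : ℕ) (ht : t = k + 1)
    (hb : 1 ≤ b) (ha : a ≤ m)
    (h : ∀ (r c : Fin t → ℕ) (hV : ∀ x y, (r x, c y) ∈ (Set.Icc 1 m ×ˢ Set.Icc 1 n : Set (ℕ × ℕ))),
      StrictMono r → StrictMono c → (∀ x, r x ≤ a) → (∀ x, b ≤ c x) →
      Matrix.det (Matrix.of fun x y => (MvPolynomial.X ⟨(r x, c y), hV x y⟩ :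
        MvPolynomial (Set.Icc 1 m ×ˢ Set.Icc 1 n : Set (ℕ × ℕ)) K)) ∈ I)
    (r s : Fin (k + 1) → ℕ) (hr : ∀ i, r i < a) (hs : ∀ j, s j < n + 1 - b) :
    mnr (gm K (pos m n hm hn)) r s ∈ I := by
  subst ht
  by_cases hri : Function.Injective r
  swap
  · rw [mnr_row_not_inj _ _ _ hri]; exact I.zero_mem
  by_cases hsi : Function.Injective s
  swap
  · rw [mnr_col_not_inj _ _ _ hsi]; exact I.zero_mem
  obtain ⟨c, hcdef⟩ : ∃ c : Fin (k + 1) → ℕ, ∀ j, c j = n - s j := ⟨_, fun _ => rfl⟩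
  have hci : Function.Injective c := by
    intro i j hij
    apply hsi
    have := hs i
    have := hs j
    rw [hcdef, hcdef] at hij
    omega
  have m1 : StrictMono (r ∘ Tuple.sort r) :=
    (Tuple.monotone_sort r).strictMono_of_injective (hri.comp (Tuple.sort r).injective)
  have m2 : StrictMono (c ∘ Tuple.sort c) :=
    (Tuple.monotone_sort c).strictMono_of_injective (hci.comp (Tuple.sort c).injective)
  refine mnr_perm I _ r s (Tuple.sort r) (Tuple.sort c) ?_
  have hV : ∀ x y, ((r ∘ Tuple.sort r) x + 1, (c ∘ Tuple.sort c) y) ∈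
      (Set.Icc 1 m ×ˢ Set.Icc 1 n : Set (ℕ × ℕ)) := by
    intro x y
    have := hr (Tuple.sort r x)
    have := hs (Tuple.sort c y)
    simp only [Set.mem_prod, Set.mem_Icc, Function.comp_apply, hcdef]
    omega
  have h1 := h (fun x => (r ∘ Tuple.sort r) x + 1) (c ∘ Tuple.sort c) hV
    (fun i j hij => Nat.add_lt_add_right (m1 hij) 1) m2 (fun x => hr _) (fun x => ?_)
  · rw [mnr]
    convert h1 using 3
    ext x y : 2
    have := hr (Tuple.sort r x)
    have := hs (Tuple.sort c y)
    rw [gm]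
    congr 1
    apply Subtype.ext
    refine (pos_spec m n hm hn _ ?_ _ ?_).trans ?_
    · simp only [Function.comp_apply]; omega
    · simp only [Function.comp_apply]; omega
    · simp only [Function.comp_apply, hcdef]
  · have := hs (Tuple.sort c x)
    simp only [Function.comp_apply, hcdef]
    omega

/-- the conditions attached to a mixed ladder -/
def TT (a b t : ℕ → ℕ) (s : ℕ) : Finset (ℕ × ℕ × ℕ) :=
  (Finset.Icc 1 s).image fun i => (a i + 1 - t i, n + 2 - b i - t i, t i - 1)

theorem JJ_eq (hm : 1 ≤ m) (hn : 1 ≤ n) (s : ℕ) (a b t : ℕ → ℕ)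
    (hr : ∀ i ∈ Set.Icc 1 s, a i ≤ m ∧ 1 ≤ b i ∧ b i ≤ n ∧ 1 ≤ t i ∧ t i ≤ a i ∧ t i + b i ≤ n + 1) :
    JJ (gm K (pos m n hm hn)) (TT n a b t s) =
      mixedLadderIdeal K (Set.Icc 1 m ×ˢ Set.Icc 1 n) a b t n s := by
  apply le_antisymm
  · refine JJ_le _ _ (fun p q k hc r s' hr' hs' => ?_)
    rw [TT, Finset.mem_image] at hc
    obtain ⟨i, hi, hc⟩ := hc
    simp only [Prod.mk.injEq] at hc
    have hi' : i ∈ Set.Icc 1 s := by simpa using hi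
    have h1 := hr i hi'
    refine mnr_mem_sorted m n hm hn _ (a i) (b i) (t i) k (by omega) h1.2.1 h1.1 ?_ r s' ?_ ?_
    · intro r c hV hrm hcm hra hcb
      rw [mixedLadderIdeal]
      refine Ideal.mem_iSup_of_mem i (Ideal.mem_iSup_of_mem hi' (Ideal.subset_span ?_))
      refine ⟨r, c, hrm, hcm, fun x y => ⟨?_, hV x y⟩, rfl⟩
      have := hV x y
      simp only [Set.mem_prod, Set.mem_Icc] at this
      exact ⟨this.1.1, hra x, hcb y, this.2.2⟩
    · intro i; have := hr' i; omega
    · intro i; have := hs' i; omega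
  · rw [mixedLadderIdeal]
    refine iSup₂_le (fun i hi => ?_)
    rw [Ideal.span_le]
    rintro _ ⟨r, c, hrm, hcm, h, rfl⟩
    have h1 := hr i hi
    have hpos : 0 < t i := by omega
    refine gen_mem m n hm hn _ (a i) (b i) (t i) (t i - 1) (by omega) h1.2.1 h1.1 h1.2.2.1 ?_ r c
      (fun x y => (h x y).2) (fun x => (h x ⟨0, hpos⟩).1.2.1) (fun y => (h ⟨0, hpos⟩ y).1.2.2.1)
    intro r s' hr' hs'
    refine mem_JJ _ (p := a i + 1 - t i) (q := n + 2 - b i - t i) ?_ r s' ?_ ?_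
    · rw [TT, Finset.mem_image]
      exact ⟨i, by simpa using hi, rfl⟩
    · intro i; have := hr' i; omega
    · intro i; have := hs' i; omega

theorem JJ_le_vars {σ : Type} (e : ℕ → ℕ → σ) (T : Finset (ℕ × ℕ × ℕ)) :
    JJ (gm K e) T ≤ idealOfVars σ K := by
  refine JJ_le _ _ (fun p q k _ r s _ _ => ?_)
  rw [mnr_expand_row _ r s 0]
  refine Ideal.sum_mem _ (fun j _ => Ideal.mul_mem_right _ _ ?_)
  exact Ideal.subset_span ⟨_, rfl⟩

end final
end LD

/-- A mixed ladder determinantal ideal of a one-sided ladder is prime, and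
its quotient ring is Cohen-Macaulay.  Here `L` is a one-sided ladder of the 1-based `m × n`
grid with distinguished points `(a_1,b_1) ≤ … ≤ (a_s,b_s)` on its lower border (containing
all lower outside corners), `L = L_1 ∪ ⋯ ∪ L_s`, and the sizes `t_i` satisfy
`t_i ≤ min (a_i) (m - b_i + 1)` and `b_{i-1} - b_i < t_i - t_{i-1} < a_i - a_{i-1}`. -/
theorem mixedLadderIdeal_prime_CM (m n s : ℕ) (hm : 1 ≤ m) (hmn : m ≤ n) (hs : 1 ≤ s)
    (L : Set (ℕ × ℕ)) (a b t : ℕ → ℕ)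
    (hLsub : L ⊆ Set.Icc 1 m ×ˢ Set.Icc 1 n)
    (hcorner : ((1 : ℕ), n) ∈ L)
    (hladder : ∀ i h j' k' : ℕ, i < h → k' < j' →
      (i, j') ∈ L → (h, k') ∈ L → (i, k') ∈ L ∧ (h, j') ∈ L)
    (hrange : ∀ i ∈ Set.Icc 1 s, 1 ≤ a i ∧ a i ≤ m ∧ 1 ≤ b i ∧ b i ≤ n)
    (hmono : ∀ i, 1 ≤ i → i < s → a i ≤ a (i + 1) ∧ b i ≤ b (i + 1))
    (hborder : ∀ i ∈ Set.Icc 1 s, (a i, b i) ∈ L ∧ (a i + 1, b i - 1) ∉ L)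
    (hdecomp : L = ⋃ i ∈ Set.Icc 1 s, ladderRegion a b n i)
    (hcorners : ∀ p ∈ L, (p.1 + 1, p.2) ∉ L → (p.1, p.2 - 1) ∉ L →
      ∃ i ∈ Set.Icc 1 s, p = (a i, b i))
    (hsize : ∀ i ∈ Set.Icc 1 s, 1 ≤ t i ∧ t i ≤ min (a i) (m - b i + 1))
    (hgap : ∀ i, 2 ≤ i → i ≤ s →
      ((b (i - 1) : ℤ) - b i < (t i : ℤ) - t (i - 1)) ∧
      ((t i : ℤ) - t (i - 1) < (a i : ℤ) - a (i - 1))) :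
    (mixedLadderIdeal K (Set.Icc 1 m ×ˢ Set.Icc 1 n) a b t n s).IsPrime ∧
    QuotientIsCohenMacaulay (mixedLadderIdeal K (Set.Icc 1 m ×ˢ Set.Icc 1 n) a b t n s) := by
  have hn : 1 ≤ n := hm.trans hmn
  have hr : ∀ i ∈ Set.Icc 1 s, a i ≤ m ∧ 1 ≤ b i ∧ b i ≤ n ∧ 1 ≤ t i ∧ t i ≤ a i ∧
      t i + b i ≤ n + 1 := by
    intro i hi
    have h1 := hrange i hi
    have h2 := hsize i hi
    rw [le_min_iff] at h2
    omega
  classical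
  letI : Fintype (Set.Icc 1 m ×ˢ Set.Icc 1 n : Set (ℕ × ℕ)) :=
    ((Set.finite_Icc 1 m).prod (Set.finite_Icc 1 n)).fintype
  have hcard : m * n ≤ Fintype.card (Set.Icc 1 m ×ˢ Set.Icc 1 n : Set (ℕ × ℕ)) := by
    rw [← Nat.card_eq_fintype_card, Nat.card_coe_set_eq, Set.ncard_prod]
    simp [Set.ncard_eq_toFinset_card']
  have hchain : LD.chain (LD.TT n a b t s) := by
    have key := LD.chain_aux s a b t hmono hgap
    intro c hc c' hc'
    rw [LD.TT, Finset.mem_image] at hc hc'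
    obtain ⟨i, hi, rfl⟩ := hc
    obtain ⟨j, hj, rfl⟩ := hc'
    rw [Finset.mem_Icc] at hi hj
    have hi' := hr i hi
    have hj' := hr j hj
    simp only [LD.cle]
    rcases le_total i j with h | h
    · have := key i hi.1 j h hj.2
      omega
    · have := key j hj.1 i h hi.2
      omega
  have hrg : ∀ c ∈ LD.TT n a b t s, c.1 + c.2.2 ≤ m ∧ c.2.1 + c.2.2 ≤ n := by
    intro c hc
    rw [LD.TT, Finset.mem_image] at hc
    obtain ⟨i, hi, rfl⟩ := hc
    rw [Finset.mem_Icc] at hi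
    have hi' := hr i hi
    simp only
    omega
  have he : ∀ x < m, ∀ y < n, (LD.pos m n hm hn x y).1.1 - 1 = x ∧
      n - (LD.pos m n hm hn x y).1.2 = y := by
    intro x hx y hy
    rw [LD.pos_spec m n hm hn x hx y hy]
    simp only
    omega
  obtain ⟨g1, g2, g3⟩ := LD.main_ind (K := K) (LD.pos m n hm hn) (fun u => u.1.1 - 1)
    (fun u => n - u.1.2) m n he hcard _ _ _ rfl rfl hchain hrg
  have hJ := LD.JJ_eq (K := K) m n hm hn s a b t hr
  have hv := LD.JJ_le_vars (K := K) (LD.pos m n hm hn) (LD.TT n a b t s)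
  rw [hJ] at g1 g2 g3 hv
  exact ⟨g1, LD.cm_of_depth _ hv _ g2 g3⟩
end
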